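/- arXiv:2509.02231 — 3 statements merged into one kernel-verified Lean document; each statement's English description precedes it below -/
import Mathlib

section
/- Let G be a generalised Heisenberg group with finite generating set S and let ψ be any automorphism of G. Then gr_{ψ,G}^S(n) ≺ gr_{∼G}^S(n), where gr_{∼G}^S is the (ordinary) conjugacy growth function of G, i.e. the twisted conjugacy growth function with respect to the identity automorphism. -/
/-- Word norm with respect to a finite generating set (inverses of generators allowed). -/
noncomputable def wordNorm {G : Type*} [Group G] (S : Finset G) (g : G) : ℕ :=
  sInf {n | ∃ l : List G, l.length = n ∧ (∀ x ∈ l, x ∈ S ∨ x⁻¹ ∈ S) ∧ l.prod = g}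

/-- `x` and `y` are `ψ`-twisted conjugate. -/
def TwistedConj {G : Type*} [Group G] (ψ : G ≃* G) (x y : G) : Prop :=
  ∃ g : G, g * x * (ψ g)⁻¹ = y

/-- The twisted conjugacy growth function: number of `ψ`-twisted conjugacy classes
with a representative of word norm at most `n`. -/
noncomputable def twistedGrowth {G : Type*} [Group G] (ψ : G ≃* G) (S : Finset G) (n : ℕ) : ℕ :=
  Set.ncard ((fun x => {y | TwistedConj ψ x y}) '' {g : G | wordNorm S g ≤ n})

def GrowthLE (f g : ℕ → ℝ) : Prop :=
  ∃ c : ℕ, 0 < c ∧ ∀ n : ℕ, max 1 (f n) ≤ c * max 1 (g (c * n))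

def GrowthEquiv (f g : ℕ → ℝ) : Prop := GrowthLE f g ∧ GrowthLE g f


namespace TwGrowth

section Word

variable {G : Type*} [Group G] {S : Finset G}

/-- A letter: a generator or the inverse of one. -/
def Letter (S : Finset G) (x : G) : Prop := x ∈ S ∨ x⁻¹ ∈ S

lemma exists_list (hgen : Subgroup.closure (S : Set G) = ⊤) (g : G) :
    ∃ l : List G, (∀ x ∈ l, x ∈ S ∨ x⁻¹ ∈ S) ∧ l.prod = g := by
  have hg : g ∈ Subgroup.closure (S : Set G) := by rw [hgen]; trivial
  rw [← Subgroup.mem_toSubmonoid, Subgroup.closure_toSubmonoid] at hg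
  obtain ⟨l, hl, h⟩ := Submonoid.exists_list_of_mem_closure hg
  exact ⟨l, by simpa using hl, h⟩

lemma wn_list (hgen : Subgroup.closure (S : Set G) = ⊤) (g : G) :
    ∃ l : List G, l.length = wordNorm S g ∧ (∀ x ∈ l, x ∈ S ∨ x⁻¹ ∈ S) ∧ l.prod = g := by
  obtain ⟨l, hl, h⟩ := exists_list hgen g
  exact Nat.sInf_mem (s := {n | ∃ l : List G, l.length = n ∧ (∀ x ∈ l, x ∈ S ∨ x⁻¹ ∈ S) ∧
    l.prod = g}) ⟨l.length, l, rfl, hl, h⟩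

lemma wn_le_length (l : List G) (hl : ∀ x ∈ l, x ∈ S ∨ x⁻¹ ∈ S) :
    wordNorm S l.prod ≤ l.length :=
  Nat.sInf_le ⟨l, rfl, hl, rfl⟩

lemma wn_one : wordNorm S (1 : G) = 0 := by
  have := wn_le_length (S := S) ([] : List G) (by simp)
  simpa using this

lemma wn_mul (hgen : Subgroup.closure (S : Set G) = ⊤) (x y : G) :
    wordNorm S (x * y) ≤ wordNorm S x + wordNorm S y := by
  obtain ⟨l, h1, h2, h3⟩ := wn_list hgen x
  obtain ⟨l', h1', h2', h3'⟩ := wn_list hgen y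
  have := wn_le_length (S := S) (l ++ l') (by
    intro a ha
    rcases List.mem_append.1 ha with h | h
    · exact h2 a h
    · exact h2' a h)
  rw [List.prod_append, h3, h3', List.length_append, h1, h1'] at this
  exact this

lemma wn_inv (hgen : Subgroup.closure (S : Set G) = ⊤) (x : G) :
    wordNorm S x⁻¹ ≤ wordNorm S x := by
  obtain ⟨l, h1, h2, h3⟩ := wn_list hgen x
  have := wn_le_length (S := S) (l.map (fun x => x⁻¹)).reverse (by
    intro a ha
    simp only [List.mem_reverse, List.mem_map] at ha
    obtain ⟨b, hb, rfl⟩ := ha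
    rw [inv_inv]
    exact (h2 b hb).symm)
  rw [← List.prod_inv_reverse, h3, List.length_reverse, List.length_map, h1] at this
  exact this

lemma wn_pow (hgen : Subgroup.closure (S : Set G) = ⊤) (x : G) (n : ℕ) :
    wordNorm S (x ^ n) ≤ n * wordNorm S x := by
  induction n with
  | zero => simp [wn_one]
  | succ k ih =>
    rw [pow_succ]
    refine (wn_mul hgen _ _).trans ?_
    rw [Nat.succ_mul]
    omega

lemma wn_zpow (hgen : Subgroup.closure (S : Set G) = ⊤) (x : G) (j : ℤ) :
    wordNorm S (x ^ j) ≤ j.natAbs * wordNorm S x := by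
  rcases Int.natAbs_eq j with h | h
  · conv_lhs => rw [h]
    rw [zpow_natCast]
    exact wn_pow hgen x _
  · conv_lhs => rw [h]
    rw [zpow_neg, zpow_natCast]
    exact (wn_inv hgen _).trans (wn_pow hgen x _)

lemma ball_zero (hgen : Subgroup.closure (S : Set G) = ⊤) (x : G) (h : wordNorm S x ≤ 0) :
    x = 1 := by
  obtain ⟨l, h1, h2, h3⟩ := wn_list hgen x
  have : l.length = 0 := by omega
  rw [List.length_eq_zero_iff] at this
  subst this
  simpa using h3.symm

lemma ball_finite (hgen : Subgroup.closure (S : Set G) = ⊤) (n : ℕ) :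
    {g : G | wordNorm S g ≤ n}.Finite := by
  classical
  have hT : ({x : G | x ∈ S ∨ x⁻¹ ∈ S}).Finite := by
    have h1 : ({x : G | x ∈ S ∨ x⁻¹ ∈ S}) = (S : Set G) ∪ (fun x => x⁻¹) ⁻¹' (S : Set G) := by
      ext x; simp
    rw [h1]
    refine S.finite_toSet.union (S.finite_toSet.preimage ?_)
    exact inv_injective.injOn
  induction n with
  | zero =>
    refine (Set.finite_singleton (1 : G)).subset ?_
    intro x hx
    exact ball_zero hgen x hx
  | succ k ih =>
    refine ((hT.mul ih).union (Set.finite_singleton (1 : G))).subset ?_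
    intro x hx
    obtain ⟨l, h1, h2, h3⟩ := wn_list hgen x
    cases l with
    | nil => right; simpa using h3.symm
    | cons a l =>
      left
      refine Set.mem_mul.2 ⟨a, h2 a (by simp), l.prod, ?_, by simpa using h3⟩
      have := wn_le_length (S := S) l (fun b hb => h2 b (by simp [hb]))
      have hx' : wordNorm S x ≤ k + 1 := hx
      simp only [List.length_cons] at h1
      simp only [Set.mem_ofPred_eq]
      omega

/-- The finitely many letters have a uniform bound. -/
lemma letter_bound (p : G → ℚ) : ∃ C : ℕ, ∀ x, (x ∈ S ∨ x⁻¹ ∈ S) → p x ≤ C := by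
  classical
  obtain ⟨C, hC⟩ := exists_nat_ge (∑ s ∈ S, (|p s| + |p s⁻¹|))
  refine ⟨C, fun x hx => le_trans ?_ hC⟩
  rcases hx with hx | hx
  · have := Finset.single_le_sum (f := fun s => |p s| + |p s⁻¹|)
      (fun s _ => by positivity) hx
    linarith [le_abs_self (p x), abs_nonneg (p x⁻¹)]
  · have := Finset.single_le_sum (f := fun s => |p s| + |p s⁻¹|)
      (fun s _ => by positivity) hx
    simp only [inv_inv] at this
    linarith [le_abs_self (p x), abs_nonneg (p x⁻¹)]

lemma subadd_bound (hgen : Subgroup.closure (S : Set G) = ⊤) (p : G → ℚ) (h1 : p 1 ≤ 0)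
    (hp : ∀ x y, p (x * y) ≤ p x + p y) :
    ∃ C : ℕ, ∀ x, p x ≤ C * wordNorm S x := by
  obtain ⟨C, hC⟩ := letter_bound (S := S) p
  refine ⟨C, fun x => ?_⟩
  obtain ⟨l, hl, h2, rfl⟩ := wn_list hgen x
  rw [← hl]
  clear hl
  induction l with
  | nil => simpa using h1
  | cons a l ih =>
    rw [List.prod_cons, List.length_cons]
    have := ih (fun b hb => h2 b (by simp [hb]))
    have := hC a (h2 a (by simp))
    have := hp a l.prod
    push_cast
    linarith

lemma hom_bound (hgen : Subgroup.closure (S : Set G) = ⊤) (p : G → ℚ)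
    (hp : ∀ x y, p (x * y) = p x + p y) :
    ∃ C : ℕ, ∀ x, |p x| ≤ C * wordNorm S x := by
  refine subadd_bound hgen (fun x => |p x|) ?_ ?_
  · have := hp 1 1
    simp at this
    simp [this]
  · intro x y
    simp only [hp]
    exact abs_add_le _ _

lemma aut_bound (hgen : Subgroup.closure (S : Set G) = ⊤) (ψ : G ≃* G) :
    ∃ C : ℕ, ∀ x, wordNorm S (ψ x) ≤ C * wordNorm S x := by
  obtain ⟨C, hC⟩ := subadd_bound hgen (fun x => (wordNorm S (ψ x) : ℚ)) (by simp [wn_one])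
    (fun x y => by
      simp only [map_mul]
      exact_mod_cast wn_mul hgen _ _)
  exact ⟨C, fun x => by exact_mod_cast hC x⟩

/-- Quadratic bound for quasi-homomorphisms with bilinear defect. -/
lemma quad_bound (hgen : Subgroup.closure (S : Set G) = ⊤) (f : G → ℚ) (B : G → G → ℚ)
    (hf : ∀ x y, f (x * y) = f x + f y + B x y)
    (hB : ∀ x y w, B x (y * w) = B x y + B x w) :
    ∃ C : ℕ, ∀ x, |f x| ≤ C * (wordNorm S x) ^ 2 := by
  have hB1 : ∀ x, B x 1 = 0 := fun x => by
    have := hB x 1 1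
    simp at this
    exact this
  have hf1 : f 1 = 0 := by
    have := hf 1 1
    rw [hB1] at this
    simp at this
    exact this
  choose CB hCB using fun x => hom_bound hgen (B x) (hB x)
  obtain ⟨C1, hC1⟩ := letter_bound (S := S) (fun x => |f x|)
  obtain ⟨C2, hC2⟩ := letter_bound (S := S) (fun x => (CB x : ℚ))
  refine ⟨C1 + C2, fun x => ?_⟩
  obtain ⟨l, hl, h2, rfl⟩ := wn_list hgen x
  rw [← hl]
  clear hl
  induction l with
  | nil => simp [hf1]
  | cons a l ih =>
    rw [List.prod_cons, List.length_cons, hf]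
    have i1 := ih (fun b hb => h2 b (by simp [hb]))
    have i2 := hC1 a (h2 a (by simp))
    have i3 := hC2 a (h2 a (by simp))
    have i4 := hCB a l.prod
    have i5 : (wordNorm S l.prod : ℚ) ≤ l.length := by
      exact_mod_cast wn_le_length l (fun b hb => h2 b (by simp [hb]))
    have i6 : |f a + f l.prod + B a l.prod| ≤ |f a| + |f l.prod| + |B a l.prod| :=
      abs_add_three _ _ _
    have i7 : (CB a : ℚ) * wordNorm S l.prod ≤ C2 * l.length :=
      mul_le_mul i3 i5 (by positivity) (by positivity)
    push_cast
    have i8 : (0 : ℚ) ≤ C1 * l.length := by positivity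
    have i9 : (0 : ℚ) ≤ C2 * l.length := by positivity
    have i10 : (0 : ℚ) ≤ C2 := by positivity
    push_cast at i1
    nlinarith

end Word

section Count

variable {G : Type*} [Group G] {S : Finset G}

lemma tc_refl (ψ : G ≃* G) (x : G) : TwistedConj ψ x x := ⟨1, by simp⟩

lemma tc_symm {ψ : G ≃* G} {x y : G} (h : TwistedConj ψ x y) : TwistedConj ψ y x := by
  obtain ⟨g, rfl⟩ := h
  exact ⟨g⁻¹, by simp [mul_assoc]⟩

lemma tc_trans {ψ : G ≃* G} {x y w : G} (h : TwistedConj ψ x y) (h' : TwistedConj ψ y w) :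
    TwistedConj ψ x w := by
  obtain ⟨g, rfl⟩ := h
  obtain ⟨k, rfl⟩ := h'
  exact ⟨k * g, by simp [mul_assoc]⟩

lemma tc_class {ψ : G ≃* G} {x y : G} :
    ({w | TwistedConj ψ x w} = {w | TwistedConj ψ y w}) ↔ TwistedConj ψ x y := by
  constructor
  · intro h
    have : y ∈ {w | TwistedConj ψ y w} := tc_refl ψ y
    rw [← h] at this
    exact this
  · intro h
    ext w
    exact ⟨fun h' => tc_trans (tc_symm h) h', fun h' => tc_trans h h'⟩

lemma count_le (hgen : Subgroup.closure (S : Set G) = ⊤) (ψ : G ≃* G) (n m K : ℕ)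
    (F : G → G) (t : G → ℕ)
    (hF : ∀ x, wordNorm S x ≤ n → wordNorm S (F x) ≤ m)
    (ht : ∀ x, wordNorm S x ≤ n → t x < K)
    (hinj : ∀ x y, wordNorm S x ≤ n → wordNorm S y ≤ n →
      TwistedConj (MulEquiv.refl G) (F x) (F y) → t x = t y → TwistedConj ψ x y) :
    twistedGrowth ψ S n ≤ K * twistedGrowth (MulEquiv.refl G) S m := by
  classical
  unfold twistedGrowth
  set A := (fun x => {y | TwistedConj ψ x y}) '' {g : G | wordNorm S g ≤ n} with hA
  set B := (fun x => {y | TwistedConj (MulEquiv.refl G) x y}) '' {g : G | wordNorm S g ≤ m} with hB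
  have hBf : B.Finite := (ball_finite hgen m).image _
  have hch : ∀ a ∈ A, ∃ x, wordNorm S x ≤ n ∧ {y | TwistedConj ψ x y} = a := by
    rintro a ⟨x, hx, rfl⟩
    exact ⟨x, hx, rfl⟩
  choose! r hr1 hr2 using hch
  have hle := Set.ncard_le_ncard_of_injOn (s := A)
    (t := (B ×ˢ (↑(Finset.range K) : Set ℕ)))
    (fun a => ({y | TwistedConj (MulEquiv.refl G) (F (r a)) y}, t (r a))) ?_ ?_ ?_
  · rw [Set.ncard_prod, Set.ncard_coe_finset, Finset.card_range] at hle
    rw [mul_comm]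
    exact hle
  · intro a ha
    refine ⟨⟨F (r a), hF _ (hr1 a ha), rfl⟩, ?_⟩
    simpa using ht _ (hr1 a ha)
  · intro a ha b hb hab
    simp only [Prod.mk.injEq] at hab
    have := hinj _ _ (hr1 a ha) (hr1 b hb) (tc_class.1 hab.1) hab.2
    rw [← hr2 a ha, ← hr2 b hb]
    exact tc_class.2 this
  · exact hBf.prod (Finset.finite_toSet _)

lemma growthLE_of (hgen : Subgroup.closure (S : Set G) = ⊤) (ψ : G ≃* G) (c K : ℕ)
    (h : ∀ n, 1 ≤ n → ∃ (F : G → G) (t : G → ℕ),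
      (∀ x, wordNorm S x ≤ n → wordNorm S (F x) ≤ c * n) ∧
      (∀ x, wordNorm S x ≤ n → t x < K) ∧
      (∀ x y, wordNorm S x ≤ n → wordNorm S y ≤ n →
      TwistedConj (MulEquiv.refl G) (F x) (F y) → t x = t y → TwistedConj ψ x y)) :
    GrowthLE (fun n => (twistedGrowth ψ S n : ℝ))
      (fun n => (twistedGrowth (MulEquiv.refl G) S n : ℝ)) := by
  refine ⟨c + K + 1, by omega, fun n => ?_⟩
  have key : twistedGrowth ψ S n ≤
      (c + K + 1) * max 1 (twistedGrowth (MulEquiv.refl G) S ((c + K + 1) * n)) := by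
    rcases Nat.eq_zero_or_pos n with rfl | hn
    · have := count_le hgen ψ 0 ((c + K + 1) * 0) 1 id (fun _ => 0) (by simp) (by simp)
        (by
          intro x y hx hy _ _
          rw [ball_zero hgen x hx, ball_zero hgen y hy]
          exact tc_refl _ _)
      refine this.trans ?_
      exact Nat.mul_le_mul (by omega) (le_max_right _ _)
    · obtain ⟨F, t, hF, ht, hinj⟩ := h n hn
      have := count_le hgen ψ n ((c + K + 1) * n) K F t
        (fun x hx => (hF x hx).trans (Nat.mul_le_mul_right n (by omega))) ht hinj
      refine this.trans ?_
      exact Nat.mul_le_mul (by omega) (le_max_right _ _)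
  have h2 : 1 ≤ (c + K + 1) * max 1 (twistedGrowth (MulEquiv.refl G) S ((c + K + 1) * n)) :=
    Nat.mul_pos (by omega) (by omega)
  have h3 := max_le h2 key
  beta_reduce
  exact_mod_cast h3

end Count

section Add

lemma add_one' {G A : Type*} [Group G] [AddCommGroup A] {p : G → A}
    (hp : ∀ x y, p (x * y) = p x + p y) : p 1 = 0 := by
  have := hp 1 1
  simpa using this

lemma add_inv' {G A : Type*} [Group G] [AddCommGroup A] {p : G → A}
    (hp : ∀ x y, p (x * y) = p x + p y) (x : G) : p x⁻¹ = - p x := by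
  have := hp x⁻¹ x
  rw [inv_mul_cancel, add_one' hp] at this
  exact eq_neg_of_add_eq_zero_left this.symm

lemma add_pow' {G A : Type*} [Group G] [AddCommGroup A] {p : G → A}
    (hp : ∀ x y, p (x * y) = p x + p y) (x : G) (n : ℕ) : p (x ^ n) = n • p x := by
  induction n with
  | zero => simp [add_one' hp]
  | succ k ih => rw [pow_succ, hp, ih, succ_nsmul]

lemma add_zpow' {G A : Type*} [Group G] [AddCommGroup A] {p : G → A}
    (hp : ∀ x y, p (x * y) = p x + p y) (x : G) (j : ℤ) : p (x ^ j) = j • p x := by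
  rcases Int.natAbs_eq j with h | h
  · rw [h, zpow_natCast, add_pow' hp, natCast_zsmul]
  · rw [h, zpow_neg, zpow_natCast, add_inv' hp, add_pow' hp, neg_smul, natCast_zsmul]

/-- Extension of rational valued homomorphisms. -/
lemma ext_hom {G P : Type*} [Group G] [AddCommGroup P] (f : G → P)
    (hf : ∀ x y, f (x * y) = f x + f y) (g : G → ℚ) (hg : ∀ x y, g (x * y) = g x + g y)
    (hk : ∀ x, f x = 0 → g x = 0) : ∃ h : P →+ ℚ, ∀ x, h (f x) = g x := by
  let R : AddSubgroup P :=
    { carrier := Set.range f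
      zero_mem' := ⟨1, add_one' hf⟩
      add_mem' := by
        rintro _ _ ⟨a, rfl⟩ ⟨b, rfl⟩
        exact ⟨a * b, hf a b⟩
      neg_mem' := by
        rintro _ ⟨a, rfl⟩
        exact ⟨a⁻¹, add_inv' hf a⟩ }
  have hR : ∀ p : R, ∃ x, f x = p := fun p => p.2
  choose r hr using hR
  have hwell : ∀ x y, f x = f y → g x = g y := by
    intro x y h
    have := hk (x * y⁻¹) (by rw [hf, add_inv' hf, h, add_neg_cancel])
    rw [hg, add_inv' hg] at this
    linarith
  let g' : R →+ ℚ := AddMonoidHom.mk' (fun p => g (r p)) (by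
    intro a b
    rw [← hg]
    apply hwell
    rw [hf, hr, hr, hr]
    rfl)
  obtain ⟨h, hh⟩ := (Module.Baer.of_divisible ℚ).extension_property_addMonoidHom R.subtype
    R.subtype_injective g'
  refine ⟨h, fun x => ?_⟩
  have := DFunLike.congr_fun hh (⟨f x, ⟨x, rfl⟩⟩ : R)
  simp only [AddMonoidHom.comp_apply] at this
  refine Eq.trans this ?_
  exact hwell _ _ (hr _)

lemma prod_exists {G A ι : Type*} [Group G] [AddCommGroup A] {S : Finset G}
    (hgen : Subgroup.closure (S : Set G) = ⊤) (u : ι → G) (k : ι → ℤ) (s : Finset ι) :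
    ∃ h : G, (∀ p : G → A, (∀ x y, p (x * y) = p x + p y) → p h = ∑ i ∈ s, k i • p (u i)) ∧
      wordNorm S h ≤ ∑ i ∈ s, (k i).natAbs * wordNorm S (u i) := by
  classical
  induction s using Finset.induction_on with
  | empty => exact ⟨1, fun p hp => by simp [add_one' hp], by simp [wn_one]⟩
  | insert a s ha ih =>
    obtain ⟨h, h1, h2⟩ := ih
    refine ⟨u a ^ k a * h, fun p hp => ?_, ?_⟩
    · rw [Finset.sum_insert ha, hp, h1 p hp, add_zpow' hp]
    · rw [Finset.sum_insert ha]
      exact (wn_mul hgen _ _).trans (add_le_add (wn_zpow hgen _ _) h2)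

end Add

/-- Coordinates on a generalised Heisenberg group. -/
structure HD (G V : Type*) [Group G] [AddCommGroup V] where
  z : G
  π : G → V
  ω : G → G → ℤ
  cen : ∀ g, z * g = g * z
  zinj : ∀ j : ℤ, z ^ j = 1 → j = 0
  πmul : ∀ x y, π (x * y) = π x + π y
  πker : ∀ x, π x = 0 ↔ ∃ j : ℤ, x = z ^ j
  hω : ∀ x y, x * y = y * x * z ^ (ω x y)
  tf : ∀ (v : V) (j : ℤ), j ≠ 0 → j • v = 0 → v = 0
  surj : Function.Surjective π

namespace HD

variable {G V : Type*} [Group G] [AddCommGroup V] (D : HD G V)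

lemma zc (j : ℤ) (g : G) : D.z ^ j * g = g * D.z ^ j := by
  have : Commute D.z g := D.cen g
  exact this.zpow_left j

lemma zinj' {i j : ℤ} (h : D.z ^ i = D.z ^ j) : i = j := by
  have := D.zinj (i - j) (by rw [zpow_sub, h, mul_inv_cancel])
  omega

lemma πz (j : ℤ) : D.π (D.z ^ j) = 0 := (D.πker _).2 ⟨j, rfl⟩

lemma πeq {x y : G} : D.π x = D.π y ↔ ∃ j : ℤ, x = y * D.z ^ j := by
  constructor
  · intro h
    obtain ⟨j, hj⟩ := (D.πker (y⁻¹ * x)).1 (by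
      rw [D.πmul, add_inv' D.πmul, h, neg_add_cancel])
    exact ⟨j, by rw [← hj]; group⟩
  · rintro ⟨j, rfl⟩
    rw [D.πmul, D.πz, add_zero]

lemma ωeq {x y : G} {j : ℤ} (h : x * y = y * x * D.z ^ j) : D.ω x y = j := by
  rw [D.hω x y] at h
  exact D.zinj' (mul_left_cancel h)

lemma ω_mul_right (x y w : G) : D.ω x (y * w) = D.ω x y + D.ω x w := by
  apply D.ωeq
  calc x * (y * w) = (x * y) * w := by group
    _ = y * x * D.z ^ (D.ω x y) * w := by rw [D.hω x y]
    _ = y * x * (D.z ^ (D.ω x y) * w) := by group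
    _ = y * (x * w) * D.z ^ (D.ω x y) := by rw [D.zc]; group
    _ = y * (w * x * D.z ^ (D.ω x w)) * D.z ^ (D.ω x y) := by rw [D.hω x w]
    _ = y * w * x * (D.z ^ (D.ω x w) * D.z ^ (D.ω x y)) := by group
    _ = _ := by rw [← zpow_add, add_comm]

lemma ω_swap (x y : G) : D.ω x y = - D.ω y x := by
  apply D.ωeq
  rw [D.hω y x, mul_assoc (x * y), ← zpow_add, add_neg_cancel, zpow_zero, mul_one]

lemma ω_mul_left (x y w : G) : D.ω (x * y) w = D.ω x w + D.ω y w := by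
  rw [D.ω_swap, D.ω_mul_right, D.ω_swap w x, D.ω_swap w y]
  ring

lemma ω_z_right (x : G) (j : ℤ) : D.ω x (D.z ^ j) = 0 := by
  apply D.ωeq
  rw [D.zc, zpow_zero, mul_one]

lemma ω_self (x : G) : D.ω x x = 0 := D.ωeq (by simp)

lemma ω_inv_right (x y : G) : D.ω x y⁻¹ = - D.ω x y := add_inv' (D.ω_mul_right x) y

lemma ω_zpow_right (x y : G) (j : ℤ) : D.ω x (y ^ j) = j * D.ω x y := by
  rw [add_zpow' (D.ω_mul_right x) y, smul_eq_mul]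

lemma ω_congr_right (x : G) {y w : G} (h : D.π y = D.π w) : D.ω x y = D.ω x w := by
  obtain ⟨j, rfl⟩ := D.πeq.1 h
  rw [D.ω_mul_right, D.ω_z_right, add_zero]

lemma ω_congr_left (x : G) {y w : G} (h : D.π y = D.π w) : D.ω y x = D.ω w x := by
  rw [D.ω_swap, D.ω_congr_right x h, ← D.ω_swap]

lemma tf_smul (E : HD G V) (v : V) (j : ℤ) (hv : v ≠ 0) (h : j • v = 0) : j = 0 := by
  by_contra hj
  exact hv (E.tf v j hj h)

lemma conj_π {x y : G} (h : TwistedConj (MulEquiv.refl G) x y) : D.π x = D.π y := by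
  obtain ⟨g, rfl⟩ := h
  simp only [MulEquiv.refl_apply, D.πmul, add_inv' D.πmul]
  abel

/-- Auxiliary central extension used to build a quadratic function. -/
structure K (D : HD G V) where
  a : G
  b : ℤ

instance : Mul (K D) := ⟨fun x y => ⟨x.a * y.a, x.b + y.b - D.ω x.a y.a⟩⟩
instance : One (K D) := ⟨⟨1, 0⟩⟩
instance : Inv (K D) := ⟨fun x => ⟨x.a⁻¹, - x.b⟩⟩

lemma K_ext {D : HD G V} {x y : K D} (h1 : x.a = y.a) (h2 : x.b = y.b) : x = y := by
  cases x; cases y; simp_all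

lemma K_mul_a (x y : K D) : (x * y).a = x.a * y.a := rfl
lemma K_mul_b (x y : K D) : (x * y).b = x.b + y.b - D.ω x.a y.a := rfl
lemma K_one_a : (1 : K D).a = 1 := rfl
lemma K_one_b : (1 : K D).b = 0 := rfl
lemma K_inv_a (x : K D) : (x⁻¹).a = x.a⁻¹ := rfl
lemma K_inv_b (x : K D) : (x⁻¹).b = - x.b := rfl

instance : Group (K D) := Group.ofLeftAxioms
  (by
    intro x y w
    apply K_ext
    · simp only [K_mul_a, mul_assoc]
    · simp only [K_mul_b, K_mul_a, D.ω_mul_left, D.ω_mul_right]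
      ring)
  (by
    intro x
    apply K_ext
    · simp only [K_mul_a, K_one_a, one_mul]
    · simp only [K_mul_b, K_one_a, K_one_b]
      have : D.ω 1 x.a = 0 := D.ωeq (by simp)
      rw [this]; ring)
  (by
    intro x
    apply K_ext
    · simp only [K_mul_a, K_inv_a, K_one_a, inv_mul_cancel]
    · simp only [K_mul_b, K_inv_a, K_inv_b, K_one_b]
      rw [D.ω_swap, D.ω_inv_right, D.ω_self]; ring)

lemma K_pow (j : ℤ) : (⟨D.z, -2⟩ : K D) ^ j = ⟨D.z ^ j, -2 * j⟩ := by
  have hn : ∀ n : ℕ, (⟨D.z, -2⟩ : K D) ^ n = ⟨D.z ^ n, -2 * n⟩ := by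
    intro n
    induction n with
    | zero =>
      apply K_ext
      · rw [pow_zero, K_one_a, pow_zero]
      · rw [pow_zero, K_one_b]; simp
    | succ k ih =>
      rw [pow_succ, ih]
      apply K_ext
      · rw [K_mul_a, pow_succ]
      · rw [K_mul_b]
        have : D.ω (D.z ^ k) D.z = 0 := by
          have := D.ω_z_right (D.z ^ k) 1
          simpa using this
        simp only [this]
        push_cast; ring
  rcases Int.natAbs_eq j with h | h
  · rw [h, zpow_natCast, hn, zpow_natCast]
  · rw [h, zpow_neg, zpow_natCast, hn, zpow_neg, zpow_natCast]
    apply K_ext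
    · rfl
    · rw [K_inv_b]; simp

lemma K_comm : commutator (K D) ≤ Subgroup.zpowers (⟨D.z, -2⟩ : K D) := by
  rw [commutator_def, Subgroup.commutator_le]
  intro x _ y _
  refine Subgroup.mem_zpowers_iff.2 ⟨D.ω x.a y.a, ?_⟩
  rw [K_pow, commutatorElement_def, eq_mul_inv_iff_mul_eq, eq_mul_inv_iff_mul_eq]
  apply K_ext
  · simp only [K_mul_a]
    rw [mul_assoc, D.zc, ← D.hω]
  · simp only [K_mul_b]
    have h1 : ∀ w, D.ω (D.z ^ D.ω x.a y.a) w = 0 := fun w => by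
      rw [D.ω_swap, D.ω_z_right, neg_zero]
    simp only [K_mul_a, D.ω_mul_left, h1]
    rw [D.ω_swap y.a x.a]
    ring

/-- A quadratic function detecting the central direction. -/
lemma exists_quad : ∃ (f : G → ℚ) (c : ℚ), (∀ x y, f (x * y) = f x + f y + c * D.ω x y) ∧
    (∀ j : ℤ, f (D.z ^ j) = j) := by
  let q : K D → Additive (Abelianization (K D)) := fun x => Additive.ofMul (Abelianization.of x)
  have hq : ∀ x y, q (x * y) = q x + q y := fun x y => by
    simp only [q, map_mul, ofMul_mul]
  have hz0 : ∀ w, D.ω D.z w = 0 := fun w => D.ωeq (by rw [D.cen]; simp)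
  let i : Multiplicative ℤ → K D := fun j => ⟨D.z ^ j.toAdd, 0⟩
  have hi : ∀ x y, i (x * y) = i x * i y := fun x y => by
    apply K_ext
    · simp only [i, K_mul_a, toAdd_mul, zpow_add]
    · simp only [i, K_mul_b, D.ω_z_right]; simp
  obtain ⟨F, hF⟩ := ext_hom (fun j => q (i j)) (fun x y => by simp only [hi, hq])
    (fun j : Multiplicative ℤ => ((j.toAdd : ℤ) : ℚ)) (fun x y => by simp) (by
      intro x hx
      have h1 : Abelianization.of (i x) = 1 := by
        simpa [q] using hx
      have h2 : i x ∈ commutator (K D) := by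
        rw [← Abelianization.ker_of]; exact h1
      obtain ⟨j, hj⟩ := Subgroup.mem_zpowers_iff.1 (D.K_comm h2)
      rw [K_pow] at hj
      have e1 : D.z ^ j = D.z ^ x.toAdd := congrArg K.a hj
      have e2 : -2 * j = 0 := congrArg K.b hj
      have e3 := D.zinj' e1
      have e4 : x.toAdd = 0 := by omega
      simp [e4])
  refine ⟨fun x => F (q ⟨x, 0⟩), F (q ⟨1, 1⟩), ?_, ?_⟩
  · intro x y
    have hp : ∀ i j : Multiplicative ℤ, F (q ⟨1, (i * j).toAdd⟩) =
        F (q ⟨1, i.toAdd⟩) + F (q ⟨1, j.toAdd⟩) := by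
      intro i j
      rw [← map_add, ← hq]
      congr 2
      apply K_ext
      · simp only [K_mul_a, one_mul]
      · simp only [K_mul_b, D.ω_self, toAdd_mul, sub_zero]
    have h1 := add_zpow' (p := fun i : Multiplicative ℤ => F (q ⟨1, i.toAdd⟩)) hp
      (Multiplicative.ofAdd 1) (D.ω x y)
    have h2 : (⟨x * y, 0⟩ : K D) = ⟨x, 0⟩ * ⟨y, 0⟩ * ⟨1, D.ω x y⟩ := by
      have h10 : ∀ w, D.ω w 1 = 0 := fun w => by
        simpa using D.ω_z_right w 0
      apply K_ext
      · simp only [K_mul_a, mul_one]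
      · simp only [K_mul_b, K_mul_a, h10]; ring
    beta_reduce
    rw [h2, hq, hq, map_add, map_add]
    simp only [toAdd_zpow, toAdd_ofAdd, smul_eq_mul, mul_one, zsmul_eq_mul] at h1
    rw [h1, mul_comm (F _)]
  · intro j
    have := hF (Multiplicative.ofAdd j)
    simpa [i] using this

end HD

namespace HD

section Cases

variable {G V : Type*} [Group G] [AddCommGroup V] (D : HD G V) {S : Finset G}

/-- The displacement homomorphism of the automorphism on the abelian quotient. -/
def T (ψ : G ≃* G) (g : G) : V := D.π g - D.π (ψ g)

lemma T_mul (ψ : G ≃* G) (x y : G) : D.T ψ (x * y) = D.T ψ x + D.T ψ y := by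
  simp only [T, map_mul, D.πmul]
  abel

lemma π_act (ψ : G ≃* G) (g x : G) : D.π (g * x * (ψ g)⁻¹) = D.π x + D.T ψ g := by
  simp only [T, D.πmul, add_inv' D.πmul]
  abel

lemma tc_mul_z {ψ : G ≃* G} {x y : G} (h : TwistedConj ψ x y) (j : ℤ) :
    TwistedConj ψ (x * D.z ^ j) (y * D.z ^ j) := by
  obtain ⟨g, rfl⟩ := h
  refine ⟨g, ?_⟩
  have := D.zc j (ψ g)⁻¹
  simp only [mul_assoc] at this ⊢
  rw [this]

lemma tc_period {ψ : G ≃* G} {x : G} {t : ℤ} (h : TwistedConj ψ x (x * D.z ^ t))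
    {a b : ℤ} (hab : t ∣ a - b) : TwistedConj ψ (x * D.z ^ a) (x * D.z ^ b) := by
  have key : ∀ (k : ℕ) (c : ℤ), TwistedConj ψ (x * D.z ^ c) (x * D.z ^ (c + t * k)) := by
    intro k c
    induction k with
    | zero => simpa using tc_refl ψ _
    | succ k ih =>
      refine tc_trans ih ?_
      have := D.tc_mul_z h (c + t * k)
      rw [mul_assoc, ← zpow_add] at this
      convert this using 3
      push_cast; ring
  obtain ⟨k, hk⟩ := hab
  rcases Int.natAbs_eq k with h' | h'
  · have := key k.natAbs b
    rw [← h', ← hk] at this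
    refine tc_symm ?_
    convert this using 3
    ring
  · have := key k.natAbs a
    have e : t * (k.natAbs : ℤ) = - (a - b) := by
      rw [hk]
      conv_rhs => rw [h']
      ring
    rw [e] at this
    convert this using 3
    ring

lemma case_period (hgen : Subgroup.closure (S : Set G) = ⊤) (ψ : G ≃* G) (t : ℤ) (ht : t ≠ 0)
    (h : ∀ x, TwistedConj ψ x (x * D.z ^ t)) :
    GrowthLE (fun n => (twistedGrowth ψ S n : ℝ))
      (fun n => (twistedGrowth (MulEquiv.refl G) S n : ℝ)) := by
  choose r hr using D.surj
  have h1 : ∀ x, ∃ j : ℤ, x = r (D.π x) * D.z ^ j := fun x => D.πeq.1 (hr _).symm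
  choose j hj using h1
  refine growthLE_of hgen ψ 1 t.natAbs (fun n hn => ⟨id, fun x => (j x % t).natAbs, ?_, ?_, ?_⟩)
  · intro x hx
    simpa using hx
  · intro x _
    have := Int.emod_lt_abs (j x) ht
    have h2 := Int.emod_nonneg (j x) ht
    rw [Int.abs_eq_natAbs] at this
    beta_reduce
    omega
  · intro x y _ _ hc hxy
    have hπ := D.conj_π hc
    simp only [id] at hπ
    have e : j x % t = j y % t := by
      have := Int.emod_nonneg (j x) ht
      have := Int.emod_nonneg (j y) ht
      simp only at hxy
      omega
    rw [hj x, hj y, hπ]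
    exact D.tc_period (h _) (show j y ≡ j x [ZMOD t] from e.symm).dvd

/-- Case where the automorphism is trivial on the quotient and on the centre. -/
lemma case_inner (hgen : Subgroup.closure (S : Set G) = ⊤) (ψ : G ≃* G)
    (hT : ∀ g, D.T ψ g = 0)
    (hc : ∀ g, (∀ x, D.ω g x = 0) → ψ g = g) :
    GrowthLE (fun n => (twistedGrowth ψ S n : ℝ))
      (fun n => (twistedGrowth (MulEquiv.refl G) S n : ℝ)) := by
  have h1 : ∀ g, ∃ j : ℤ, ψ g = g * D.z ^ j := fun g => D.πeq.1 (by
    have := hT g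
    rw [T, sub_eq_zero] at this
    exact this.symm)
  choose τ hτ using h1
  have τmul : ∀ x y, τ (x * y) = τ x + τ y := by
    intro x y
    apply D.zinj'
    have h2 := hτ (x * y)
    rw [map_mul, hτ x, hτ y] at h2
    have h3 := D.zc (τ x) y
    have : x * y * (D.z ^ τ x * D.z ^ τ y) = x * y * D.z ^ τ (x * y) := by
      rw [← h2]
      simp only [mul_assoc]
      rw [← mul_assoc y, ← h3]
      simp only [mul_assoc]
    rw [zpow_add]
    exact (mul_left_cancel this).symm
  obtain ⟨H, hH⟩ := ext_hom (fun g => (fun s : S => D.ω g s))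
    (fun x y => by ext s; simp [D.ω_mul_left]) (fun g => (τ g : ℚ))
    (fun x y => by rw [τmul]; push_cast; rfl) (by
      intro g hg
      have hg' : ∀ s ∈ S, D.ω g s = 0 := fun s hs => congrFun hg ⟨s, hs⟩
      have hg2 : ∀ x, D.ω g x = 0 := by
        intro x
        have hx : x ∈ Subgroup.closure (S : Set G) := by rw [hgen]; trivial
        induction hx using Subgroup.closure_induction with
        | mem x hx => exact hg' x hx
        | one => exact add_one' (D.ω_mul_right g)
        | mul x y _ _ hx hy => rw [D.ω_mul_right, hx, hy, add_zero]
        | inv x _ hx => rw [D.ω_inv_right, hx, neg_zero]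
      have h2 := hτ g
      rw [hc g hg2] at h2
      have h3 : D.z ^ τ g = 1 := by
        have : g * D.z ^ τ g = g * 1 := by rw [← h2, mul_one]
        exact mul_left_cancel this
      have := D.zinj _ h3
      simp [this])
  -- coordinates of `H`
  classical
  let q : S → ℚ := fun s => H (Pi.single s 1)
  have hHq : ∀ v : S → ℤ, H v = ∑ s, (v s : ℚ) * q s := by
    intro v
    have e : v = ∑ s, v s • (Pi.single s (1 : ℤ) : S → ℤ) := by
      ext t
      simp [Finset.sum_apply, Pi.single_apply]
    conv_lhs => rw [e]
    rw [map_sum]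
    refine Finset.sum_congr rfl (fun s _ => ?_)
    rw [map_zsmul, zsmul_eq_mul]
  let d : ℕ := ∏ s, (q s).den
  have hd : d ≠ 0 := Finset.prod_ne_zero_iff.2 (fun s _ => (q s).den_nz)
  have hk : ∀ s, ∃ k : ℤ, (d : ℚ) * q s = k := by
    intro s
    obtain ⟨e, he⟩ : (q s).den ∣ d := Finset.dvd_prod_of_mem _ (Finset.mem_univ s)
    refine ⟨e * (q s).num, ?_⟩
    rw [he]
    push_cast
    have := Rat.mul_den_eq_num (q s)
    linear_combination (e : ℚ) * this
  choose k hk using hk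
  obtain ⟨w, hw, -⟩ := prod_exists (A := ℤ) hgen (fun s : S => (s : G)) k Finset.univ
  have hw' : ∀ g, D.ω g w = d * τ g := by
    intro g
    have e1 := hw (D.ω g) (D.ω_mul_right g)
    have e2 := hH g
    rw [hHq] at e2
    have : ((D.ω g w : ℤ) : ℚ) = d * τ g := by
      rw [e1, ← e2, Finset.mul_sum]
      push_cast
      refine Finset.sum_congr rfl (fun s _ => ?_)
      rw [smul_eq_mul]
      push_cast
      rw [← hk]
      ring
    exact_mod_cast this
  refine growthLE_of hgen ψ (d + wordNorm S w) 1
    (fun n hn => ⟨fun x => x ^ d * w⁻¹, fun _ => 0, ?_, by simp, ?_⟩)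
  · intro x hx
    refine (wn_mul hgen _ _).trans ?_
    have i1 := wn_pow hgen x d
    have i2 := wn_inv hgen w
    nlinarith [Nat.mul_le_mul_left d hx, Nat.mul_le_mul_left (wordNorm S w) hn]
  · intro x y _ _ hc _
    have hπ := D.conj_π hc
    simp only [D.πmul, add_pow' D.πmul] at hπ
    have hπ2 : D.π x = D.π y := by
      have h3 : (d : ℤ) • (D.π x - D.π y) = 0 := by
        rw [natCast_zsmul, nsmul_sub, sub_eq_zero]
        exact add_right_cancel hπ
      exact sub_eq_zero.1 (D.tf _ _ (by exact_mod_cast hd) h3)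
    obtain ⟨j, hj⟩ := D.πeq.1 hπ2.symm
    obtain ⟨g, hg⟩ := hc
    simp only [MulEquiv.refl_apply] at hg
    refine ⟨g, ?_⟩
    -- compute the exponents
    have hyd : y ^ d = x ^ d * D.z ^ (j * d) := by
      have hcm : Commute x (D.z ^ j) := (D.zc j x).symm
      rw [hj, hcm.mul_pow, ← zpow_natCast (D.z ^ j), ← zpow_mul]
    have e1 : g * (x ^ d * w⁻¹) = (x ^ d * w⁻¹) * g * D.z ^ (j * d) := by
      rw [mul_inv_eq_iff_eq_mul, hyd] at hg
      rw [hg]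
      have h3 := D.zc (j * d) w⁻¹
      have h4 := D.zc (j * d) g
      simp only [mul_assoc]
      rw [← h4, ← mul_assoc (D.z ^ _), h3]
      simp only [mul_assoc]
    have e2 := D.ωeq e1
    rw [D.ω_mul_right, D.ω_inv_right, hw', add_pow' (D.ω_mul_right g), nsmul_eq_mul] at e2
    have e3 : j = D.ω g x - τ g := by
      have hd' : (d : ℤ) ≠ 0 := by exact_mod_cast hd
      apply mul_left_cancel₀ hd'
      linarith
    rw [hj, e3, hτ, D.hω g x, mul_inv_rev, ← zpow_neg]
    have h5 := D.zc (-τ g) g⁻¹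
    have h6 := D.zc (D.ω g x) g⁻¹
    rw [h5]
    simp only [mul_assoc]
    rw [← mul_assoc (D.z ^ _) g⁻¹, h6, sub_eq_add_neg, zpow_add]
    simp only [mul_assoc]
    rw [mul_inv_cancel_left]

end Cases

end HD

namespace HD

section Main

variable {G V : Type*} [Group G] [AddCommGroup V] (D : HD G V) {S : Finset G}

/-- Linear size preimages under the displacement homomorphism. -/
lemma small_preimage [Module.Finite ℤ V] (hgen : Subgroup.closure (S : Set G) = ⊤) (ψ : G ≃* G) :
    ∃ C : ℕ, ∀ g x, D.π x = D.T ψ g → ∃ h, D.T ψ h = D.T ψ g ∧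
      wordNorm S h ≤ C * wordNorm S x := by
  let R : AddSubgroup V :=
    { carrier := Set.range (D.T ψ)
      zero_mem' := ⟨1, add_one' (D.T_mul ψ)⟩
      add_mem' := by
        rintro _ _ ⟨a, rfl⟩ ⟨b, rfl⟩
        exact ⟨a * b, D.T_mul ψ a b⟩
      neg_mem' := by
        rintro _ ⟨a, rfl⟩
        exact ⟨a⁻¹, add_inv' (D.T_mul ψ) a⟩ }
  let M : Submodule ℤ V := AddSubgroup.toIntSubmodule R
  have hM : ∀ g, D.T ψ g ∈ M := fun g => ⟨g, rfl⟩
  have : Module.IsTorsionFree ℤ V := by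
    refine Module.IsTorsionFree.of_smul_eq_zero ?_
    intro r m h
    by_contra! hh
    exact hh.2 (D.tf m r hh.1 h)
  have : Module.Free ℤ M := Module.free_of_finite_type_torsion_free'
  let b := Module.Free.chooseBasis ℤ M
  have hu : ∀ i, ∃ u, D.T ψ u = (b i : V) := fun i => (b i).2
  choose u hu using hu
  have hc : ∀ i, ∃ h : V →+ ℚ, ∀ g, h (D.T ψ g) = (b.repr ⟨D.T ψ g, hM g⟩ i : ℤ) := by
    intro i
    refine ext_hom (D.T ψ) (D.T_mul ψ) (fun g => ((b.repr ⟨D.T ψ g, hM g⟩ i : ℤ) : ℚ)) ?_ ?_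
    · intro x y
      have : (⟨D.T ψ (x * y), hM (x * y)⟩ : M) = ⟨D.T ψ x, hM x⟩ + ⟨D.T ψ y, hM y⟩ :=
        Subtype.ext (D.T_mul ψ x y)
      simp only [this, map_add, Finsupp.add_apply]
      push_cast; rfl
    · intro x hx
      have : (⟨D.T ψ x, hM x⟩ : M) = 0 := Subtype.ext hx
      simp [this]
  choose c hc using hc
  have hC : ∀ i, ∃ C : ℕ, ∀ x, |c i (D.π x)| ≤ C * wordNorm S x := fun i =>
    hom_bound hgen (fun x => c i (D.π x)) (fun x y => by simp only [D.πmul, map_add])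
  choose C hC using hC
  refine ⟨∑ i, C i * wordNorm S (u i), fun g x hx => ?_⟩
  obtain ⟨h, h1, h2⟩ := prod_exists (A := V) hgen u
    (fun i => b.repr ⟨D.T ψ g, hM g⟩ i) Finset.univ
  refine ⟨h, ?_, h2.trans ?_⟩
  · rw [h1 _ (D.T_mul ψ)]
    simp only [hu]
    have := b.sum_repr ⟨D.T ψ g, hM g⟩
    have e := congrArg M.subtype this
    rw [map_sum] at e
    simp only [map_smul, Submodule.subtype_apply] at e
    exact e
  · rw [Finset.sum_mul]
    refine Finset.sum_le_sum (fun i _ => ?_)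
    have i1 := hC i x
    rw [hx, hc i g, ← Int.cast_abs] at i1
    have i2 : (b.repr ⟨D.T ψ g, hM g⟩ i).natAbs ≤ C i * wordNorm S x := by
      have : |b.repr ⟨D.T ψ g, hM g⟩ i| ≤ ((C i * wordNorm S x : ℕ) : ℤ) := by
        exact_mod_cast i1
      rw [Int.abs_eq_natAbs] at this
      exact_mod_cast this
    calc _ ≤ (C i * wordNorm S x) * wordNorm S (u i) := Nat.mul_le_mul_right _ i2
      _ = _ := by ring

/-- Quadratic bound on the fibre parameter. -/
lemma fibre_bound [Module.Finite ℤ V] (hgen : Subgroup.closure (S : Set G) = ⊤) (ψ : G ≃* G) :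
    ∃ C : ℕ, ∀ (n : ℕ) (x x0 : G), wordNorm S x ≤ n → wordNorm S x0 ≤ n →
      (∃ k, D.T ψ k = D.π x0 - D.π x) →
      ∃ j : ℤ, |j| ≤ C * n ^ 2 ∧ TwistedConj ψ x (x0 * D.z ^ j) := by
  obtain ⟨Ch, hCh⟩ := D.small_preimage hgen ψ
  obtain ⟨Cp, hCp⟩ := aut_bound hgen ψ
  obtain ⟨f, c, hf, hfz⟩ := D.exists_quad
  obtain ⟨Cf, hCf⟩ := quad_bound hgen f (fun x y => c * D.ω x y) hf
    (fun x y w => by rw [D.ω_mul_right]; push_cast; ring)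
  refine ⟨Cf * (2 + 2 * Ch + Cp * (2 * Ch)) ^ 2, fun n x x0 hx hx0 ⟨k, hk⟩ => ?_⟩
  obtain ⟨h, h1, h2⟩ := hCh k (x0 * x⁻¹) (by
    rw [hk, D.πmul, add_inv' D.πmul, sub_eq_add_neg])
  obtain ⟨j, hj⟩ := D.πeq.1 (show D.π (h * x * (ψ h)⁻¹) = D.π x0 by
    rw [D.π_act, h1, hk]; abel)
  refine ⟨j, ?_, h, hj⟩
  have hzj : D.z ^ j = x0⁻¹ * (h * x * (ψ h)⁻¹) := by rw [hj]; group
  have n1 : wordNorm S (x0 * x⁻¹) ≤ 2 * n := by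
    have := wn_mul hgen x0 x⁻¹
    have := wn_inv hgen x
    omega
  have n2 : wordNorm S h ≤ 2 * Ch * n := by
    calc _ ≤ _ := h2
      _ ≤ Ch * (2 * n) := Nat.mul_le_mul_left _ n1
      _ = _ := by ring
  have n3 : wordNorm S (ψ h) ≤ Cp * (2 * Ch) * n := by
    calc _ ≤ _ := hCp h
      _ ≤ Cp * (2 * Ch * n) := Nat.mul_le_mul_left _ n2
      _ = _ := by ring
  have n4 : wordNorm S (D.z ^ j) ≤ (2 + 2 * Ch + Cp * (2 * Ch)) * n := by
    rw [hzj]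
    have m1 := wn_mul hgen x0⁻¹ (h * x * (ψ h)⁻¹)
    have m2 := wn_mul hgen (h * x) (ψ h)⁻¹
    have m3 := wn_mul hgen h x
    have m4 := wn_inv hgen x0
    have m5 := wn_inv hgen (ψ h)
    nlinarith
  have n5 := hCf (D.z ^ j)
  rw [hfz] at n5
  have n6 : |j| ≤ ((Cf * wordNorm S (D.z ^ j) ^ 2 : ℕ) : ℤ) := by exact_mod_cast n5
  refine n6.trans ?_
  have n7 : Cf * wordNorm S (D.z ^ j) ^ 2 ≤ Cf * (2 + 2 * Ch + Cp * (2 * Ch)) ^ 2 * n ^ 2 := by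
    calc _ ≤ Cf * ((2 + 2 * Ch + Cp * (2 * Ch)) * n) ^ 2 :=
          Nat.mul_le_mul_left _ (Nat.pow_le_pow_left n4 2)
      _ = _ := by ring
  exact_mod_cast n7

/-- Degenerate elements: the stabiliser of the coset acts trivially. -/
def Deg (ψ : G ≃* G) (x : G) : Prop := ∀ g, D.T ψ g = 0 → g * x * (ψ g)⁻¹ = x

lemma act_formula (ψ : G ≃* G) (g : G) (hg : D.T ψ g = 0) :
    ∃ τ : ℤ, ∀ x, g * x * (ψ g)⁻¹ = x * D.z ^ (D.ω g x + τ) := by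
  rw [T, sub_eq_zero] at hg
  obtain ⟨t, ht⟩ := D.πeq.1 hg
  refine ⟨t, fun x => ?_⟩
  rw [mul_inv_eq_iff_eq_mul, D.hω g x]
  conv_lhs => rw [ht]
  rw [mul_assoc x _ (ψ g), D.zc (D.ω g x + t) (ψ g), zpow_add]
  have := D.zc (D.ω (ψ g * D.z ^ t) x)
  have h2 : D.ω (ψ g * D.z ^ t) x = D.ω g x := by rw [← ht]
  rw [h2]
  simp only [mul_assoc]
  rw [D.zc (D.ω g x) (D.z ^ t)]

lemma nondeg_bound [Module.Finite ℤ V] (hgen : Subgroup.closure (S : Set G) = ⊤) (ψ : G ≃* G)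
    (hψz : ψ D.z = D.z) :
    ∃ C : ℕ, ∀ (n : ℕ) (x : G), 1 ≤ n → wordNorm S x ≤ n → ¬ D.Deg ψ x →
      ∃ N : ℤ, N ≠ 0 ∧ |N| ≤ C * n ∧ TwistedConj ψ x (x * D.z ^ N) := by
  have hψzj : ∀ j : ℤ, ψ (D.z ^ j) = D.z ^ j := fun j => by rw [map_zpow, hψz]
  let W : AddSubgroup V :=
    { carrier := {v | ∃ g, D.T ψ g = 0 ∧ D.π g = v}
      zero_mem' := ⟨1, add_one' (D.T_mul ψ), add_one' D.πmul⟩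
      add_mem' := by
        rintro _ _ ⟨a, ha, rfl⟩ ⟨b, hb, rfl⟩
        exact ⟨a * b, by rw [D.T_mul, ha, hb, add_zero], D.πmul a b⟩
      neg_mem' := by
        rintro _ ⟨a, ha, rfl⟩
        exact ⟨a⁻¹, by rw [add_inv' (D.T_mul ψ), ha, neg_zero], add_inv' D.πmul a⟩ }
  obtain ⟨s, hs⟩ : (AddSubgroup.toIntSubmodule W).FG := IsNoetherian.noetherian _
  have hs' : AddSubgroup.closure (s : Set V) = W := by
    have := congrArg Submodule.toAddSubgroup hs
    rw [Submodule.span_int_eq_addSubgroupClosure] at this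
    simpa using this
  have hsW : ∀ v ∈ s, ∃ g, D.T ψ g = 0 ∧ D.π g = v := by
    intro v hv
    have : v ∈ W := by rw [← hs']; exact AddSubgroup.subset_closure hv
    exact this
  choose! g hg1 hg2 using hsW
  have hτ : ∀ v ∈ s, ∃ τ : ℤ, ∀ x, g v * x * (ψ (g v))⁻¹ = x * D.z ^ (D.ω (g v) x + τ) :=
    fun v hv => D.act_formula ψ (g v) (hg1 v hv)
  choose! τ hτ using hτ
  have hCω : ∀ v, ∃ C : ℕ, ∀ x, |((D.ω (g v) x : ℤ) : ℚ)| ≤ C * wordNorm S x := fun v =>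
    hom_bound hgen (fun x => ((D.ω (g v) x : ℤ) : ℚ)) (fun x y => by
      rw [D.ω_mul_right]; push_cast; rfl)
  choose C hC using hCω
  refine ⟨∑ v ∈ s, (C v + (τ v).natAbs), fun n x hn hx hdeg => ?_⟩
  -- some generator acts nontrivially
  have hex : ∃ v ∈ s, D.ω (g v) x + τ v ≠ 0 := by
    by_contra! hall
    apply hdeg
    have hw : ∀ v ∈ AddSubgroup.closure (s : Set V), ∃ k, D.π k = v ∧ k * x * (ψ k)⁻¹ = x := by
      intro v hv
      induction hv using AddSubgroup.closure_induction with
      | mem v hv =>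
        refine ⟨g v, hg2 v hv, ?_⟩
        rw [hτ v hv, hall v hv, zpow_zero, mul_one]
      | zero => exact ⟨1, add_one' D.πmul, by simp⟩
      | add a b _ _ ha hb =>
        obtain ⟨k, rfl, hk⟩ := ha
        obtain ⟨l, rfl, hl⟩ := hb
        refine ⟨k * l, D.πmul k l, ?_⟩
        calc k * l * x * (ψ (k * l))⁻¹ = k * (l * x * (ψ l)⁻¹) * (ψ k)⁻¹ := by
              simp only [map_mul]; group
          _ = x := by rw [hl, hk]
      | neg a _ ha =>
        obtain ⟨k, rfl, hk⟩ := ha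
        refine ⟨k⁻¹, add_inv' D.πmul k, ?_⟩
        conv_lhs => rw [← hk]
        simp [mul_assoc]
    intro k hk
    obtain ⟨l, hl, hlx⟩ := hw (D.π k) (by rw [hs']; exact ⟨k, hk, rfl⟩)
    obtain ⟨j, rfl⟩ := D.πeq.1 hl.symm
    rw [map_mul, hψzj]
    have := D.zc j x
    calc l * D.z ^ j * x * (ψ l * D.z ^ j)⁻¹ = l * (D.z ^ j * x) * (D.z ^ j)⁻¹ * (ψ l)⁻¹ := by group
      _ = l * x * (ψ l)⁻¹ := by rw [this]; group
      _ = x := hlx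
  obtain ⟨v, hv, hne⟩ := hex
  refine ⟨D.ω (g v) x + τ v, hne, ?_, g v, hτ v hv x⟩
  have i1 : |D.ω (g v) x| ≤ ((C v * wordNorm S x : ℕ) : ℤ) := by exact_mod_cast hC v x
  have i2 : C v + (τ v).natAbs ≤ ∑ v ∈ s, (C v + (τ v).natAbs) :=
    Finset.single_le_sum (f := fun v => C v + (τ v).natAbs) (fun _ _ => Nat.zero_le _) hv
  have i3 : C v * wordNorm S x + (τ v).natAbs ≤ (∑ v ∈ s, (C v + (τ v).natAbs)) * n := by
    calc _ ≤ C v * n + (τ v).natAbs * n := by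
          refine add_le_add (Nat.mul_le_mul_left _ hx) ?_
          exact Nat.le_mul_of_pos_right _ hn
      _ = (C v + (τ v).natAbs) * n := by ring
      _ ≤ _ := Nat.mul_le_mul_right _ i2
  have i4 : |D.ω (g v) x + τ v| ≤ |D.ω (g v) x| + |τ v| := abs_add_le _ _
  rw [Int.abs_eq_natAbs (τ v)] at i4
  have i5 : ((C v * wordNorm S x : ℕ) : ℤ) + ((τ v).natAbs : ℤ) ≤
      (((∑ v ∈ s, (C v + (τ v).natAbs)) * n : ℕ) : ℤ) := by exact_mod_cast i3
  generalize (∑ v ∈ s, (C v + (τ v).natAbs)) = Q at i5 ⊢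
  push_cast at i1 i5
  rw [Int.abs_eq_natAbs (τ v)] at i5
  linarith

end Main

end HD

namespace HD

section Final

variable {G V : Type*} [Group G] [AddCommGroup V] (D : HD G V) {S : Finset G}

lemma case_main [Module.Finite ℤ V] (hgen : Subgroup.closure (S : Set G) = ⊤) (ψ : G ≃* G)
    (hψz : ψ D.z = D.z) (a b : G) (ha : ∃ u, D.T ψ u = D.π a) (ha0 : D.π a ≠ 0)
    (hab : ∀ x y : G, D.Deg ψ x → D.Deg ψ y → ∀ i k i' k' : ℤ,
      D.π (x * a ^ i * b ^ k) = D.π (y * a ^ i' * b ^ k') →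
      (∃ g, D.T ψ g = D.π x - D.π y) ∧ (x = y → i = i' ∧ k = k')) :
    GrowthLE (fun n => (twistedGrowth ψ S n : ℝ))
      (fun n => (twistedGrowth (MulEquiv.refl G) S n : ℝ)) := by
  classical
  obtain ⟨C, hC⟩ := D.fibre_bound hgen ψ
  obtain ⟨CN, hCN⟩ := D.nondeg_bound hgen ψ hψz
  refine growthLE_of hgen ψ (1 + (C + CN) * wordNorm S a + wordNorm S b) 2 (fun n hn => ?_)
  let P : G → G → Prop := fun x y => wordNorm S y ≤ n ∧ ∃ g, D.T ψ g = D.π y - D.π x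
  let r : G → G := fun x => Classical.epsilon (P x)
  have Tadd : ∀ {v w : V}, (∃ g, D.T ψ g = v) → (∃ g, D.T ψ g = w) → ∃ g, D.T ψ g = v + w := by
    rintro v w ⟨g, rfl⟩ ⟨h, rfl⟩
    exact ⟨g * h, D.T_mul ψ g h⟩
  have Tneg : ∀ {v : V}, (∃ g, D.T ψ g = v) → ∃ g, D.T ψ g = - v := by
    rintro v ⟨g, rfl⟩
    exact ⟨g⁻¹, add_inv' (D.T_mul ψ) g⟩
  have hrP : ∀ x, wordNorm S x ≤ n → P x (r x) := fun x hx =>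
    Classical.epsilon_spec (p := P x) ⟨x, hx, 1, by rw [add_one' (D.T_mul ψ), sub_self]⟩
  have hreq : ∀ x y, (∃ g, D.T ψ g = D.π x - D.π y) → r x = r y := by
    intro x y h
    have : P x = P y := by
      funext w
      apply propext
      constructor
      · rintro ⟨h1, h2⟩
        refine ⟨h1, ?_⟩
        have := Tadd h2 h
        rwa [sub_add_sub_cancel] at this
      · rintro ⟨h1, h2⟩
        refine ⟨h1, ?_⟩
        have := Tadd h2 (Tneg h)
        rwa [neg_sub, sub_add_sub_cancel] at this
    simp only [r, this]
  have hreq2 : ∀ x y, wordNorm S x ≤ n → wordNorm S y ≤ n →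
      (∃ g, D.T ψ g = D.π (r x) - D.π (r y)) → r x = r y := by
    intro x y hx hy h
    apply hreq
    have := Tadd (Tadd (Tneg (hrP x hx).2) h) (hrP y hy).2
    convert this using 2
    abel_nf
  have hj : ∀ x, wordNorm S x ≤ n → ∃ j : ℤ, |j| ≤ C * n ^ 2 ∧ TwistedConj ψ x (r x * D.z ^ j) :=
    fun x hx => hC n x (r x) hx (hrP x hx).1 (hrP x hx).2
  choose! j hj1 hj2 using hj
  have hN : ∀ x, wordNorm S x ≤ n → ¬ D.Deg ψ x →
      ∃ N : ℤ, N ≠ 0 ∧ |N| ≤ CN * n ∧ TwistedConj ψ x (x * D.z ^ N) :=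
    fun x hx hd => hCN n x hn hx hd
  choose! N hN0 hN1 hN2 using hN
  have hn0 : (0 : ℤ) < n := by exact_mod_cast hn
  refine ⟨fun x => if D.Deg ψ (r x) then r x * a ^ (j x / n) * b ^ (j x % n)
      else r x * a ^ (j x % N (r x)), fun x => if D.Deg ψ (r x) then 0 else 1, ?_, ?_, ?_⟩
  · intro x hx
    have hr := (hrP x hx).1
    beta_reduce
    split_ifs with hd
    · have m1 := wn_mul hgen (r x * a ^ (j x / n)) (b ^ (j x % n))
      have m2 := wn_mul hgen (r x) (a ^ (j x / n))
      have m3 := wn_zpow hgen a (j x / n)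
      have m4 := wn_zpow hgen b (j x % n)
      have k1 : (j x / n).natAbs ≤ C * n := by
        have h1 := abs_le.1 (hj1 x hx)
        have h2 : j x / n ≤ C * n := by
          apply Int.ediv_le_of_le_mul hn0
          nlinarith [h1.2]
        have h3 : -((C : ℤ) * n) ≤ j x / n := by
          apply Int.le_ediv_of_mul_le hn0
          nlinarith [h1.1]
        have : |j x / n| ≤ C * n := abs_le.2 ⟨h3, h2⟩
        rw [Int.abs_eq_natAbs] at this
        exact_mod_cast this
      have k2 : (j x % n).natAbs ≤ n := by
        have h1 := Int.emod_nonneg (j x) hn0.ne'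
        have h2 := Int.emod_lt_of_pos (j x) hn0
        omega
      have k3 := Nat.mul_le_mul_right (wordNorm S a) k1
      have k4 := Nat.mul_le_mul_right (wordNorm S b) k2
      calc _ ≤ n + C * n * wordNorm S a + n * wordNorm S b := by omega
        _ ≤ n + C * n * wordNorm S a + n * wordNorm S b + CN * n * wordNorm S a :=
          Nat.le_add_right _ _
        _ = _ := by ring
    · have m2 := wn_mul hgen (r x) (a ^ (j x % N (r x)))
      have m3 := wn_zpow hgen a (j x % N (r x))
      have k1 : (j x % N (r x)).natAbs ≤ CN * n := by
        have h0 := hN0 _ hr hd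
        have h1 := Int.emod_nonneg (j x) h0
        have h2 := Int.emod_lt_abs (j x) h0
        have h3 := hN1 _ hr hd
        have : |j x % N (r x)| ≤ CN * n := by
          rw [abs_of_nonneg h1]
          linarith
        rw [Int.abs_eq_natAbs] at this
        exact_mod_cast this
      have k3 := Nat.mul_le_mul_right (wordNorm S a) k1
      calc _ ≤ n + CN * n * wordNorm S a := by omega
        _ ≤ n + CN * n * wordNorm S a + (C * n * wordNorm S a + n * wordNorm S b) :=
          Nat.le_add_right _ _
        _ = _ := by ring
  · intro x _
    beta_reduce
    split_ifs <;> omega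
  · intro x y hx hy hc ht
    have hπ := D.conj_π hc
    beta_reduce at hπ ht
    by_cases hdx : D.Deg ψ (r x)
    · by_cases hdy : D.Deg ψ (r y)
      · rw [if_pos hdx, if_pos hdy] at hπ
        obtain ⟨h1, h2⟩ := hab _ _ hdx hdy _ _ _ _ hπ
        have h3 := hreq2 x y hx hy h1
        obtain ⟨h4, h5⟩ := h2 h3
        have h6 : j x = j y := by
          rw [← Int.mul_ediv_add_emod (j x) n, ← Int.mul_ediv_add_emod (j y) n, h4, h5]
        refine tc_trans (hj2 x hx) ?_
        rw [h3, h6]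
        exact tc_symm (hj2 y hy)
      · simp [hdx, hdy] at ht
    · by_cases hdy : D.Deg ψ (r y)
      · simp [hdx, hdy] at ht
      · rw [if_neg hdx, if_neg hdy] at hπ
        rw [D.πmul, D.πmul, add_zpow' D.πmul, add_zpow' D.πmul] at hπ
        have h1 : ∃ g, D.T ψ g = D.π (r x) - D.π (r y) := by
          obtain ⟨u, hu⟩ := ha
          refine ⟨u ^ (j y % N (r y) - j x % N (r x)), ?_⟩
          rw [add_zpow' (D.T_mul ψ), hu, sub_smul, sub_eq_sub_iff_add_eq_add, add_comm, ← hπ]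
        have h3 := hreq2 x y hx hy h1
        rw [h3] at hπ
        have h4 : j x % N (r y) - j y % N (r y) = 0 := by
          apply D.tf_smul (D.π a) _ ha0
          rw [sub_smul, sub_eq_zero]
          exact add_left_cancel hπ
        have h5 : (j x) % N (r y) = j y % N (r y) := by omega
        refine tc_trans (hj2 x hx) (tc_trans ?_ (tc_symm (hj2 y hy)))
        rw [h3]
        exact D.tc_period (hN2 _ (hrP y hy).1 hdy)
          (show j y ≡ j x [ZMOD N (r y)] from h5.symm).dvd

lemma ω_ψ (ψ : G ≃* G) (hψz : ψ D.z = D.z) (x y : G) : D.ω (ψ x) (ψ y) = D.ω x y := by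
  apply D.ωeq
  rw [← map_mul, D.hω x y, map_mul, map_mul, map_zpow, hψz]

theorem main [Module.Finite ℤ V] (hgen : Subgroup.closure (S : Set G) = ⊤) (ψ : G ≃* G)
    (hψz : ψ D.z = D.z ∨ ψ D.z = D.z⁻¹) (hω0 : ∃ u v, D.ω u v ≠ 0) :
    GrowthLE (fun n => (twistedGrowth ψ S n : ℝ))
      (fun n => (twistedGrowth (MulEquiv.refl G) S n : ℝ)) := by
  rcases hψz with hψz | hψz
  swap
  · refine D.case_period hgen ψ 2 (by norm_num) (fun x => ⟨D.z, ?_⟩)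
    rw [hψz, inv_inv, D.cen, mul_assoc, zpow_two]
  by_cases hT : ∀ g, D.T ψ g = 0
  · by_cases hc : ∀ g, (∀ x, D.ω g x = 0) → ψ g = g
    · exact D.case_inner hgen ψ hT hc
    · push Not at hc
      obtain ⟨g, hg, hne⟩ := hc
      obtain ⟨τ, hτ⟩ := D.act_formula ψ g (hT g)
      refine D.case_period hgen ψ τ ?_ (fun x => ⟨g, ?_⟩)
      · rintro rfl
        have := hτ 1
        rw [hg] at this
        simp only [mul_one, add_zero, zpow_zero] at this
        exact hne (mul_inv_eq_one.1 this).symm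
      · rw [hτ x, hg, zero_add]
  · push Not at hT
    obtain ⟨u, hu⟩ := hT
    by_cases hW : ∃ g0 b, D.T ψ g0 = 0 ∧ D.ω g0 b ≠ 0
    · obtain ⟨g0, b, hg0, hb⟩ := hW
      obtain ⟨a, ha⟩ := D.surj (D.T ψ u)
      refine D.case_main hgen ψ hψz a b ⟨u, ha.symm⟩ (by rwa [ha]) ?_
      intro x y hx hy i k i' k' hπ
      have hωa : D.ω g0 a = 0 := by
        have h1 : D.π a = D.π (u * (ψ u)⁻¹) := by
          rw [ha, D.πmul, add_inv' D.πmul, T, sub_eq_add_neg]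
        have h2 : D.π g0 = D.π (ψ g0) := by
          rw [T, sub_eq_zero] at hg0
          exact hg0
        rw [D.ω_congr_right g0 h1, D.ω_mul_right, D.ω_inv_right, D.ω_congr_left (ψ u) h2,
          D.ω_ψ ψ hψz]
        ring
      obtain ⟨τ, hτ⟩ := D.act_formula ψ g0 hg0
      have hdeg : ∀ w, D.Deg ψ w → D.ω g0 w = - τ := by
        intro w hw
        have h1 := hτ w
        rw [hw g0 hg0] at h1
        have h2 : D.z ^ (D.ω g0 w + τ) = 1 := by
          have : w * D.z ^ (D.ω g0 w + τ) = w * 1 := by rw [← h1, mul_one]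
          exact mul_left_cancel this
        have := D.zinj _ h2
        omega
      have hωπ := D.ω_congr_right g0 hπ
      simp only [D.ω_mul_right, D.ω_zpow_right, hωa, hdeg x hx, hdeg y hy] at hωπ
      have hk : k = k' := by
        apply mul_right_cancel₀ hb
        linarith
      subst hk
      simp only [D.πmul, add_zpow' D.πmul, ha] at hπ
      have hπ' := add_right_cancel hπ
      refine ⟨⟨u ^ (i' - i), ?_⟩, ?_⟩
      · rw [add_zpow' (D.T_mul ψ), sub_smul, sub_eq_sub_iff_add_eq_add, add_comm, ← hπ']
      · rintro rfl
        refine ⟨?_, rfl⟩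
        have h4 : i - i' = 0 := by
          apply D.tf_smul _ _ hu
          rw [sub_smul, sub_eq_zero]
          exact add_left_cancel hπ'
        omega
    · push Not at hW
      obtain ⟨u1, u2, h12⟩ := hω0
      have hind : ∀ i k : ℤ, i • D.T ψ u1 + k • D.T ψ u2 = 0 → i = 0 ∧ k = 0 := by
        intro i k h
        have h1 : D.T ψ (u1 ^ i * u2 ^ k) = 0 := by
          rw [D.T_mul, add_zpow' (D.T_mul ψ), add_zpow' (D.T_mul ψ), h]
        have e1 := hW _ u2 h1
        have e2 := hW _ u1 h1
        rw [D.ω_swap, D.ω_mul_right, D.ω_zpow_right, D.ω_zpow_right, D.ω_self] at e1 e2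
        have h21 : D.ω u2 u1 ≠ 0 := by rw [D.ω_swap]; exact neg_ne_zero.2 h12
        constructor
        · have : i * D.ω u2 u1 = 0 := by linarith
          exact (mul_eq_zero.1 this).resolve_right h21
        · have : k * D.ω u1 u2 = 0 := by linarith
          exact (mul_eq_zero.1 this).resolve_right h12
      obtain ⟨a, ha⟩ := D.surj (D.T ψ u1)
      obtain ⟨b, hb⟩ := D.surj (D.T ψ u2)
      refine D.case_main hgen ψ hψz a b ⟨u1, ha.symm⟩ ?_ ?_
      · rw [ha]
        intro h
        have := (hind 1 0 (by rw [h]; simp)).1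
        omega
      · intro x y _ _ i k i' k' hπ
        simp only [D.πmul, add_zpow' D.πmul, ha, hb] at hπ
        refine ⟨⟨u1 ^ (i' - i) * u2 ^ (k' - k), ?_⟩, ?_⟩
        · rw [D.T_mul, add_zpow' (D.T_mul ψ), add_zpow' (D.T_mul ψ), sub_smul, sub_smul]
          rw [← sub_eq_zero] at hπ ⊢
          rw [← neg_eq_zero, ← hπ]
          abel
        · rintro rfl
          have := hind (i - i') (k - k') (by
            rw [sub_smul, sub_smul]
            rw [← sub_eq_zero] at hπ
            rw [← hπ]
            abel)
          omega

end Final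

end HD

end TwGrowth

open scoped commutatorElement

/-- For a generalised Heisenberg group, the twisted conjugacy growth of any automorphism
is bounded by the ordinary conjugacy growth. -/
theorem twisted_growth_le_conjugacy_growth
    (G : Type*) [Group G] (S : Finset G)
    (hgen : Subgroup.closure (S : Set G) = ⊤)
    (htf : ∀ (g : G) (n : ℕ), 0 < n → g ^ n = 1 → g = 1)
    (h2step : commutator G ≤ Subgroup.center G)
    (G2 : Subgroup G) [G2.Normal]
    (hG2 : ∀ g : G, g ∈ G2 ↔ ∃ n : ℕ, 0 < n ∧ g ^ n ∈ commutator G)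
    (hcyc : IsCyclic G2) (hinf : Infinite G2)
    (ψ : G ≃* G) :
    GrowthLE (fun n => (twistedGrowth ψ S n : ℝ))
      (fun n => (twistedGrowth (MulEquiv.refl G) S n : ℝ)) := by
  -- commutators
  have hcom : ∀ x y : G, ⁅x, y⁆ ∈ commutator G := fun x y =>
    Subgroup.commutator_mem_commutator (Subgroup.mem_top x) (Subgroup.mem_top y)
  have hle : commutator G ≤ G2 := fun g hg => (hG2 g).2 ⟨1, one_pos, by simpa using hg⟩
  -- elements of `G2` are central
  have hcen : ∀ x ∈ G2, ∀ g : G, x * g = g * x := by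
    intro x hx g
    obtain ⟨n, hn, hxn⟩ := (hG2 x).1 hx
    have hc := Subgroup.mem_center_iff.1 (h2step hxn) g
    have hk := Subgroup.mem_center_iff.1 (h2step (hcom g x))
    -- conjugating by `g` multiplies by the central commutator
    have h1 : g * x * g⁻¹ = ⁅g, x⁆ * x := by rw [commutatorElement_def]; group
    have h2 : (g * x * g⁻¹) ^ n = ⁅g, x⁆ ^ n * x ^ n := by
      rw [h1]
      have : Commute ⁅g, x⁆ x := (hk x).symm
      exact this.mul_pow n
    rw [conj_pow, hc, mul_inv_cancel_right] at h2
    have h3 : ⁅g, x⁆ ^ n = 1 := by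
      have : ⁅g, x⁆ ^ n * x ^ n = 1 * x ^ n := by rw [← h2, one_mul]
      exact mul_right_cancel this
    have h4 := htf _ n hn h3
    rw [h4, one_mul, mul_inv_eq_iff_eq_mul] at h1
    exact h1.symm
  -- the generator of `G2`
  obtain ⟨⟨z, hz⟩, hzgen⟩ := hcyc.exists_generator
  have hzgen' : ∀ x ∈ G2, ∃ j : ℤ, x = z ^ j := by
    intro x hx
    obtain ⟨j, hj⟩ := Subgroup.mem_zpowers_iff.1 (hzgen ⟨x, hx⟩)
    exact ⟨j, by simpa using (congrArg Subtype.val hj).symm⟩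
  have hz1 : z ≠ 1 := by
    intro h
    have : Finite G2 := by
      suffices hsub : Subsingleton G2 from Finite.of_subsingleton
      refine ⟨?_⟩
      rintro ⟨x, hx⟩ ⟨y, hy⟩
      obtain ⟨i, rfl⟩ := hzgen' x hx
      obtain ⟨j, rfl⟩ := hzgen' y hy
      simp [h]
    exact not_finite G2
  have hzinj : ∀ j : ℤ, z ^ j = 1 → j = 0 := by
    intro j hj
    by_contra hne
    apply hz1
    refine htf z j.natAbs (by omega) ?_
    rcases Int.natAbs_eq j with h | h
    · rw [h, zpow_natCast] at hj
      exact hj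
    · rw [h, zpow_neg, zpow_natCast, inv_eq_one] at hj
      exact hj
  have hωex : ∀ x y : G, ∃ j : ℤ, x * y = y * x * z ^ j := by
    intro x y
    obtain ⟨j, hj⟩ := hzgen' ⁅x, y⁆ (hle (hcom x y))
    refine ⟨j, ?_⟩
    rw [← hj, ← hcen _ (hle (hcom x y)), commutatorElement_def]
    group
  choose ω hω using hωex
  -- the abelian quotient
  let instQ : CommGroup (G ⧸ G2) :=
    { (inferInstance : Group (G ⧸ G2)) with
      mul_comm := by
        intro a b
        obtain ⟨x, rfl⟩ := QuotientGroup.mk_surjective a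
        obtain ⟨y, rfl⟩ := QuotientGroup.mk_surjective b
        refine QuotientGroup.eq.2 ?_
        have : (x * y)⁻¹ * (y * x) = ⁅y⁻¹, x⁻¹⁆ := by rw [commutatorElement_def]; group
        change (x * y)⁻¹ * (y * x) ∈ G2
        rw [this]
        exact hle (hcom _ _) }
  let D : TwGrowth.HD G (Additive (G ⧸ G2)) :=
    { z := z
      π := fun g => Additive.ofMul (g : G ⧸ G2)
      ω := ω
      cen := hcen z hz
      zinj := hzinj
      πmul := fun x y => rfl
      πker := by
        intro x
        have : (Additive.ofMul (x : G ⧸ G2) = 0) ↔ x ∈ G2 := by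
          rw [← QuotientGroup.eq_one_iff]
          exact Iff.rfl
        rw [this]
        refine ⟨hzgen' x, ?_⟩
        rintro ⟨j, rfl⟩
        exact G2.zpow_mem hz j
      hω := hω
      tf := by
        intro v j hj hv
        obtain ⟨x, hx⟩ := QuotientGroup.mk_surjective (Additive.toMul v)
        have hv' : v = Additive.ofMul (x : G ⧸ G2) := by rw [hx]; rfl
        have h1 : x ^ j ∈ G2 := by
          rw [← QuotientGroup.eq_one_iff]
          rw [hv'] at hv
          exact hv
        have h2 : x ^ j.natAbs ∈ G2 := by
          rcases Int.natAbs_eq j with h | h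
          · rw [h, zpow_natCast] at h1
            exact h1
          · rw [h, zpow_neg, zpow_natCast, inv_mem_iff] at h1
            exact h1
        obtain ⟨n, hn, hxn⟩ := (hG2 _).1 h2
        have h3 : x ∈ G2 := (hG2 x).2 ⟨j.natAbs * n, Nat.mul_pos (by omega) hn, by
          rw [pow_mul]; exact hxn⟩
        rw [hv']
        exact (QuotientGroup.eq_one_iff x).2 h3
      surj := fun v => QuotientGroup.mk_surjective (Additive.toMul v) }
  have hfin : Module.Finite ℤ (Additive (G ⧸ G2)) := by
    have h1 : Group.FG G := ⟨⟨S, hgen⟩⟩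
    have h2 : Group.FG (G ⧸ G2) := QuotientGroup.fg G2
    rw [Module.Finite.iff_addGroup_fg]
    exact GroupFG.iff_add_fg.1 h2
  -- the automorphism preserves `G2`
  have hmap : ∀ (φ : G ≃* G) (x : G), x ∈ G2 → φ x ∈ G2 := by
    intro φ x hx
    obtain ⟨n, hn, hxn⟩ := (hG2 x).1 hx
    refine (hG2 _).2 ⟨n, hn, ?_⟩
    rw [← map_pow]
    have hchar : (commutator G).map φ.toMonoidHom ≤ commutator G := by
      rw [commutator_def, Subgroup.map_commutator]
      exact Subgroup.commutator_mono le_top le_top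
    exact hchar (Subgroup.mem_map_of_mem φ.toMonoidHom hxn)
  have hψz : ψ z = z ∨ ψ z = z⁻¹ := by
    obtain ⟨i, hi⟩ := hzgen' _ (hmap ψ z hz)
    obtain ⟨k, hk⟩ := hzgen' _ (hmap ψ.symm z hz)
    have h1 : z ^ (i * k - 1) = 1 := by
      have h2 : ψ (ψ.symm z) = z := ψ.apply_symm_apply z
      rw [hk, map_zpow, hi, ← zpow_mul] at h2
      rw [zpow_sub, h2, zpow_one, mul_inv_cancel]
    have h3 : i * k = 1 := by
      have := hzinj _ h1
      omega
    rcases Int.eq_one_or_neg_one_of_mul_eq_one h3 with h | h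
    · left; rw [hi, h, zpow_one]
    · right; rw [hi, h, zpow_neg, zpow_one]
  have hω0 : ∃ u v, ω u v ≠ 0 := by
    by_contra! hall
    have hab : ∀ x y : G, x * y = y * x := fun x y => by
      rw [hω x y, hall, zpow_zero, mul_one]
    have hbot : commutator G ≤ ⊥ := by
      rw [commutator_def, Subgroup.commutator_le]
      intro x _ y _
      rw [Subgroup.mem_bot, commutatorElement_def, hab x y]
      group
    obtain ⟨n, hn, hzn⟩ := (hG2 z).1 hz
    exact hz1 (htf z n hn (hbot hzn))
  exact D.main hgen ψ hψz hω0
end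

section
/- Let G be a finitely generated group, let N ⊴ G be a normal subgroup, and let ψ be an automorphism of G with ψ(N) = N. Let ψ̄ denote the induced automorphism of G/N. Then gr_{ψ,G} ≻ gr_{ψ̄,G/N}. If moreover there exists a constant C such that for every g ∈ G the set {[ng]_ψ : n ∈ N} of ψ-twisted conjugacy classes is finite of size at most C, then gr_{ψ,G} ≃ gr_{ψ̄,G/N}. -/
theorem wordNorm_le_length {G : Type*} [Group G] (S : Finset G) (l : List G)
    (hl : ∀ x ∈ l, x ∈ S ∨ x⁻¹ ∈ S) : wordNorm S l.prod ≤ l.length :=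
  Nat.sInf_le ⟨l, rfl, hl, rfl⟩

theorem exists_wordNorm_list {G : Type*} [Group G] (S : Finset G)
    (hS : Subgroup.closure (S : Set G) = ⊤) (g : G) :
    ∃ l : List G, l.length = wordNorm S g ∧ (∀ x ∈ l, x ∈ S ∨ x⁻¹ ∈ S) ∧ l.prod = g := by
  have hne : {n | ∃ l : List G, l.length = n ∧ (∀ x ∈ l, x ∈ S ∨ x⁻¹ ∈ S) ∧ l.prod = g}.Nonempty := by
    have hg : g ∈ Subgroup.closure (S : Set G) := by rw [hS]; trivial
    rw [← Subgroup.mem_toSubmonoid, Subgroup.closure_toSubmonoid] at hg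
    obtain ⟨l, hl, hp⟩ := Submonoid.exists_list_of_mem_closure hg
    exact ⟨l.length, l, rfl, fun x hx => by simpa using hl x hx, hp⟩
  exact Nat.sInf_mem hne

theorem wordNorm_mul_le {G : Type*} [Group G] (S : Finset G)
    (hS : Subgroup.closure (S : Set G) = ⊤) (g h : G) :
    wordNorm S (g * h) ≤ wordNorm S g + wordNorm S h := by
  obtain ⟨l, h1, h2, h3⟩ := exists_wordNorm_list S hS g
  obtain ⟨m, k1, k2, k3⟩ := exists_wordNorm_list S hS h
  rw [← h1, ← k1, ← List.length_append, ← h3, ← k3, ← List.prod_append]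
  apply wordNorm_le_length
  intro x hx
  rcases List.mem_append.1 hx with hx | hx
  · exact h2 x hx
  · exact k2 x hx

theorem wordNorm_map_list {G H : Type*} [Group G] [Group H] (S : Finset G)
    (hS : Subgroup.closure (S : Set G) = ⊤) (T : Finset H) (f : H → G) :
    ∃ c : ℕ, ∀ l : List H, (∀ x ∈ l, x ∈ T ∨ x⁻¹ ∈ T) →
      wordNorm S (l.map f).prod ≤ c * l.length := by
  refine ⟨T.sup (fun t => max (wordNorm S (f t)) (wordNorm S (f t⁻¹))), fun l => ?_⟩
  induction l with
  | nil =>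
    intro _
    simpa using wordNorm_le_length S [] (by simp)
  | cons a l ih =>
    intro hl
    have h1 := ih (fun x hx => hl x (List.mem_cons_of_mem _ hx))
    have h2 : wordNorm S (f a) ≤
        T.sup (fun t => max (wordNorm S (f t)) (wordNorm S (f t⁻¹))) := by
      rcases hl a List.mem_cons_self with h | h
      · exact (le_max_left _ _).trans
          (Finset.le_sup (f := fun t => max (wordNorm S (f t)) (wordNorm S (f t⁻¹))) h)
      · have := Finset.le_sup (f := fun t => max (wordNorm S (f t)) (wordNorm S (f t⁻¹))) h
        simp only [inv_inv] at this
        exact (le_max_right _ _).trans this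
    rw [List.map_cons, List.prod_cons, List.length_cons, mul_add, mul_one]
    have := wordNorm_mul_le S hS (f a) (l.map f).prod
    omega

theorem finite_wordNorm_ball {G : Type*} [Group G] (S : Finset G)
    (hS : Subgroup.closure (S : Set G) = ⊤) (n : ℕ) : {g : G | wordNorm S g ≤ n}.Finite := by
  classical
  have h := (List.finite_length_le (S ∪ S.image (·⁻¹) : Finset G) n).image
    (fun l => (l.map Subtype.val).prod)
  refine h.subset ?_
  intro g hg
  obtain ⟨l, h1, h2, h3⟩ := exists_wordNorm_list S hS g
  have hl : ∀ x ∈ l, x ∈ (S ∪ S.image (·⁻¹) : Finset G) := by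
    intro x hx
    rcases h2 x hx with h | h
    · exact Finset.mem_union_left _ h
    · exact Finset.mem_union_right _ (Finset.mem_image.2 ⟨_, h, inv_inv x⟩)
  refine ⟨l.attach.map (fun x => ⟨x.1, hl x.1 x.2⟩), ?_, ?_⟩
  · simpa [h1] using hg
  · simp [List.map_map, Function.comp_def, h3]

theorem twistedConj_class_eq {G : Type*} [Group G] (ψ : G ≃* G) {x y : G}
    (h : TwistedConj ψ x y) : {z | TwistedConj ψ x z} = {z | TwistedConj ψ y z} := by
  obtain ⟨g, rfl⟩ := h
  ext z
  constructor
  · rintro ⟨k, rfl⟩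
    exact ⟨k * g⁻¹, by simp [mul_assoc]⟩
  · rintro ⟨k, rfl⟩
    exact ⟨k * g, by simp [mul_assoc]⟩

theorem twistedGrowth_mono {G : Type*} [Group G] (ψ : G ≃* G) (S : Finset G)
    (hS : Subgroup.closure (S : Set G) = ⊤) : Monotone (twistedGrowth ψ S) := by
  intro m n hmn
  exact Set.ncard_le_ncard (Set.image_mono fun g (hg : _ ≤ _) => hg.trans hmn)
    ((finite_wordNorm_ball S hS n).image _)

theorem growthLE_of_le (f g : ℕ → ℕ) (hg : Monotone g) (k c : ℕ)
    (h : ∀ n, f n ≤ k * g (c * n)) : GrowthLE (fun n => (f n : ℝ)) (fun n => (g n : ℝ)) := by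
  refine ⟨k + c + 1, by omega, fun n => ?_⟩
  have h1 : g (c * n) ≤ g ((k + c + 1) * n) := hg (Nat.mul_le_mul_right _ (by omega))
  have h2 : max 1 (f n) ≤ (k + c + 1) * max 1 (g ((k + c + 1) * n)) := by
    have h3 : 1 ≤ max 1 (g ((k + c + 1) * n)) := le_max_left _ _
    have h4 : g ((k + c + 1) * n) ≤ max 1 (g ((k + c + 1) * n)) := le_max_right _ _
    apply max_le
    · nlinarith
    · calc f n ≤ k * g (c * n) := h n
        _ ≤ (k + c + 1) * max 1 (g ((k + c + 1) * n)) :=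
          Nat.mul_le_mul (by omega) (h1.trans h4)
  beta_reduce
  exact_mod_cast h2

theorem image_twisted_class {G : Type*} [Group G] (N : Subgroup G) [N.Normal]
    (ψ : G ≃* G) (hψN : Subgroup.map ψ.toMonoidHom N = N) (x : G) :
    (QuotientGroup.mk' N) '' {y | TwistedConj ψ x y} =
      {y | TwistedConj (QuotientGroup.congr N N ψ hψN) (QuotientGroup.mk' N x) y} := by
  ext y
  constructor
  · rintro ⟨_, ⟨g, rfl⟩, rfl⟩
    exact ⟨QuotientGroup.mk' N g, by simp; rfl⟩
  · rintro ⟨q, rfl⟩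
    obtain ⟨g, rfl⟩ := QuotientGroup.mk'_surjective N q
    exact ⟨_, ⟨g, rfl⟩, by simp; rfl⟩

/-- Twisted conjugacy growth and quotients: `gr_{ψ,G} ≻ gr_{ψ̄,G/N}`, with equality
up to `≃` when the twisted classes of the cosets `Ng` are uniformly boundedly many. -/
theorem twisted_growth_quotient
    (G : Type*) [Group G] (N : Subgroup G) [N.Normal]
    (ψ : G ≃* G) (hψN : Subgroup.map ψ.toMonoidHom N = N)
    (S : Finset G) (hS : Subgroup.closure (S : Set G) = ⊤)
    (T : Finset (G ⧸ N)) (hT : Subgroup.closure (T : Set (G ⧸ N)) = ⊤) :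
    GrowthLE (fun n => (twistedGrowth (QuotientGroup.congr N N ψ hψN) T n : ℝ))
      (fun n => (twistedGrowth ψ S n : ℝ)) ∧
    ((∃ C : ℕ, ∀ g : G,
        ((fun m : G => {y | TwistedConj ψ (m * g) y}) '' (N : Set G)).Finite ∧
        Set.ncard ((fun m : G => {y | TwistedConj ψ (m * g) y}) '' (N : Set G)) ≤ C) →
      GrowthEquiv (fun n => (twistedGrowth ψ S n : ℝ))
        (fun n => (twistedGrowth (QuotientGroup.congr N N ψ hψN) T n : ℝ))) := by
  classical
  have hQ : GrowthLE (fun n => (twistedGrowth (QuotientGroup.congr N N ψ hψN) T n : ℝ))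
      (fun n => (twistedGrowth ψ S n : ℝ)) := by
    obtain ⟨σ, hσ⟩ := (QuotientGroup.mk'_surjective N).hasRightInverse
    obtain ⟨c, hc⟩ := wordNorm_map_list S hS T σ
    refine growthLE_of_le _ _ (twistedGrowth_mono ψ S hS) 1 c fun n => ?_
    rw [one_mul]
    have hfin := (finite_wordNorm_ball S hS (c * n)).image (fun x => {y | TwistedConj ψ x y})
    refine le_trans (Set.ncard_le_ncard ?_ (hfin.image (fun A => QuotientGroup.mk' N '' A)))
      (Set.ncard_image_le hfin)
    rintro _ ⟨q, hq, rfl⟩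
    obtain ⟨l, h1, h2, h3⟩ := exists_wordNorm_list T hT q
    refine ⟨_, ⟨(l.map σ).prod, ?_, rfl⟩, ?_⟩
    · exact (hc l h2).trans (Nat.mul_le_mul_left _ (h1.trans_le hq))
    · have : QuotientGroup.mk' N (l.map σ).prod = q := by
        rw [map_list_prod, List.map_map, ← h3, hσ.comp_eq_id, List.map_id]
      simp only [image_twisted_class N ψ hψN, this]
  refine ⟨hQ, ?_⟩
  rintro ⟨C, hC⟩
  refine ⟨?_, hQ⟩
  obtain ⟨c, hc⟩ := wordNorm_map_list T hT S (QuotientGroup.mk' N)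
  refine growthLE_of_le _ _ (twistedGrowth_mono _ T hT) C c fun n => ?_
  have hfin := (finite_wordNorm_ball S hS n).image (fun x => {y | TwistedConj ψ x y})
  have hfinQ := (finite_wordNorm_ball T hT (c * n)).image
    (fun x => {y | TwistedConj (QuotientGroup.congr N N ψ hψN) x y})
  unfold twistedGrowth
  rw [Set.ncard_eq_toFinset_card _ hfin, Set.ncard_eq_toFinset_card _ hfinQ]
  refine Finset.card_le_mul_card_image_of_maps_to (f := fun A => QuotientGroup.mk' N '' A) ?_ C ?_
  · intro A hA
    rw [Set.Finite.mem_toFinset] at hA ⊢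
    obtain ⟨g, hg, rfl⟩ := hA
    refine ⟨QuotientGroup.mk' N g, ?_, (image_twisted_class N ψ hψN g).symm⟩
    obtain ⟨l, h1, h2, h3⟩ := exists_wordNorm_list S hS g
    have := hc l h2
    rw [← map_list_prod, h3, h1] at this
    exact this.trans (Nat.mul_le_mul_left _ hg)
  · intro B hB
    rw [Set.Finite.mem_toFinset] at hB
    obtain ⟨q, -, rfl⟩ := hB
    obtain ⟨g, rfl⟩ := QuotientGroup.mk'_surjective N q
    rw [← Set.ncard_coe_finset]
    refine le_trans (Set.ncard_le_ncard ?_ (hC g).1) (hC g).2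
    intro A hA
    simp only [Finset.coe_filter, Set.Finite.mem_toFinset, Set.mem_ofPred_eq] at hA
    obtain ⟨⟨x, -, rfl⟩, hx⟩ := hA
    have hg : QuotientGroup.mk' N g ∈ QuotientGroup.mk' N '' {y | TwistedConj ψ x y} := by
      rw [hx]
      exact ⟨1, by simp⟩
    obtain ⟨y, hy, hyg⟩ := hg
    refine ⟨y * g⁻¹, ?_, ?_⟩
    · have : QuotientGroup.mk' N (y * g⁻¹) = 1 := by rw [map_mul, map_inv, hyg, mul_inv_cancel]
      simpa using (QuotientGroup.eq_one_iff _).1 this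
    · simp only [inv_mul_cancel_right]
      exact (twistedConj_class_eq ψ hy).symm
end

section
/- For every generalised Heisenberg group G (i.e. every finitely generated torsion-free 2-step nilpotent group with infinite cyclic derived-subgroup isolator), there exist an automorphism ψ of G and a natural number k such that gr_{ψ,G}(n) ≃ n^k · ln(n). -/
section Numeric
open Finset

lemma inv_sq_sum (N : ℕ) (hN : 2 ≤ N) : ∑ d ∈ Icc 2 N, (1:ℝ)/(d:ℝ)^2 ≤ 3/4 - 1/N := by
  induction N, hN using Nat.le_induction with
  | base => norm_num
  | succ n hn ih =>
    rw [Finset.sum_Icc_succ_top (by omega)]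
    have hn' : (2:ℝ) ≤ n := by exact_mod_cast hn
    have : (1:ℝ)/((n+1:ℕ):ℝ)^2 ≤ 1/n - 1/((n+1:ℕ):ℝ) := by
      push_cast
      rw [div_sub_div _ _ (by positivity) (by positivity), div_le_div_iff₀ (by positivity) (by positivity)]
      nlinarith
    linarith

lemma dvd_pairs_card (N d : ℕ) :
    ((Icc 1 N ×ˢ Icc 1 N).filter (fun q => d ∣ q.1 ∧ d ∣ q.2)).card = (N/d)^2 := by
  rw [Finset.filter_product (fun x => d ∣ x) (fun x => d ∣ x), Finset.card_product]
  have : (filter (fun x => d ∣ x) (Icc 1 N)).card = N / d := Nat.Ioc_filter_dvd_card_eq_div N d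
  rw [this, sq]

lemma coprime_count (N : ℕ) :
    (N:ℝ)^2 / 4 ≤ (((Icc 1 N ×ˢ Icc 1 N).filter (fun q => Nat.gcd q.1 q.2 = 1)).card : ℝ) := by
  rcases Nat.lt_or_ge N 2 with h | h
  · interval_cases N
    · simp
    · norm_num [Finset.filter_singleton]
  have h1 : ((Icc 1 N ×ˢ Icc 1 N).filter (fun q => ¬ Nat.gcd q.1 q.2 = 1)) ⊆
      (Icc 2 N).biUnion (fun d => (Icc 1 N ×ˢ Icc 1 N).filter (fun q => d ∣ q.1 ∧ d ∣ q.2)) := by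
    intro q hq
    simp only [mem_filter, mem_product, mem_Icc, mem_biUnion] at hq ⊢
    obtain ⟨⟨⟨h1, h2⟩, h3, h4⟩, h5⟩ := hq
    refine ⟨Nat.gcd q.1 q.2, ⟨?_, ?_⟩, ⟨⟨h1, h2⟩, h3, h4⟩, Nat.gcd_dvd_left _ _, Nat.gcd_dvd_right _ _⟩
    · have : 0 < Nat.gcd q.1 q.2 := Nat.gcd_pos_of_pos_left _ (by omega)
      omega
    · exact (Nat.gcd_le_left _ (by omega)).trans h2
  have h2 := (Finset.card_le_card h1).trans Finset.card_biUnion_le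
  simp only [dvd_pairs_card] at h2
  have h3 := Finset.card_filter_add_card_filter_not (s := Icc 1 N ×ˢ Icc 1 N) (fun q => Nat.gcd q.1 q.2 = 1)
  rw [Finset.card_product] at h3
  simp only [Nat.card_Icc, Nat.add_sub_cancel] at h3
  have h4 : (∑ d ∈ Icc 2 N, ((N/d)^2 : ℕ) : ℝ) ≤ (N:ℝ)^2 * (3/4) := by
    calc (∑ d ∈ Icc 2 N, (((N/d)^2 : ℕ) : ℝ)) ≤ ∑ d ∈ Icc 2 N, (N:ℝ)^2 * ((1:ℝ)/(d:ℝ)^2) := by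
          apply Finset.sum_le_sum
          intro d hd
          have : ((N/d : ℕ):ℝ) ≤ N / d := Nat.cast_div_le
          push_cast
          calc ((N/d : ℕ):ℝ)^2 ≤ ((N:ℝ)/d)^2 := by gcongr
            _ = _ := by ring
      _ = (N:ℝ)^2 * ∑ d ∈ Icc 2 N, ((1:ℝ)/(d:ℝ)^2) := by rw [Finset.mul_sum]
      _ ≤ _ := by
          have := inv_sq_sum N h
          have h5 : (0:ℝ) ≤ 1/N := by positivity
          gcongr
          linarith
  have h3' : (((Icc 1 N ×ˢ Icc 1 N).filter (fun q => Nat.gcd q.1 q.2 = 1)).card : ℝ)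
    + (((Icc 1 N ×ˢ Icc 1 N).filter (fun q => ¬ Nat.gcd q.1 q.2 = 1)).card : ℝ) = (N:ℝ)*N := by
    exact_mod_cast h3
  have h2' : (((Icc 1 N ×ˢ Icc 1 N).filter (fun q => ¬ Nat.gcd q.1 q.2 = 1)).card : ℝ) ≤
     (∑ d ∈ Icc 2 N, ((N/d)^2 : ℕ) : ℝ) := by exact_mod_cast h2
  nlinarith

lemma harm_lower (n : ℕ) (hn : 1 ≤ n) : Real.log n ≤ ∑ g ∈ Icc 1 n, (1:ℝ)/g := by
  have h := log_add_one_le_harmonic n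
  have h2 : ((harmonic n : ℚ) : ℝ) = ∑ g ∈ Icc 1 n, (1:ℝ)/g := by
    rw [harmonic_eq_sum_Icc]; push_cast; simp
  rw [h2] at h
  refine le_trans (Real.log_le_log (by positivity) ?_) h
  push_cast; linarith

lemma harm_upper (n : ℕ) : ∑ g ∈ Icc 1 n, (1:ℝ)/g ≤ 1 + Real.log n := by
  have h := harmonic_le_one_add_log n
  have h2 : ((harmonic n : ℚ) : ℝ) = ∑ g ∈ Icc 1 n, (1:ℝ)/g := by
    rw [harmonic_eq_sum_Icc]; push_cast; simp
  rwa [h2] at h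

lemma gcd_sum_lower (n : ℕ) :
    (n:ℝ)^2 * Real.log n / 16 ≤ ((∑ q ∈ Icc 1 n ×ˢ Icc 1 n, Nat.gcd q.1 q.2 : ℕ) : ℝ) := by
  rcases Nat.eq_zero_or_pos n with rfl | hn
  · simp
  have hmap : ∀ q ∈ Icc 1 n ×ˢ Icc 1 n, Nat.gcd q.1 q.2 ∈ Icc 1 n := by
    intro q hq
    simp only [mem_product, mem_Icc] at hq ⊢
    exact ⟨Nat.gcd_pos_of_pos_left _ (by omega), (Nat.gcd_le_left _ (by omega)).trans hq.1.2⟩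
  rw [← Finset.sum_fiberwise_of_maps_to hmap]
  push_cast
  have key : ∀ g ∈ Icc 1 n, (n:ℝ)^2/16 * (1/(g:ℝ)) ≤
      ∑ q ∈ (Icc 1 n ×ˢ Icc 1 n) with Nat.gcd q.1 q.2 = g, ((Nat.gcd q.1 q.2 : ℕ) : ℝ) := by
    intro g hg
    simp only [mem_Icc] at hg
    have e1 : ∑ q ∈ (Icc 1 n ×ˢ Icc 1 n) with Nat.gcd q.1 q.2 = g, ((Nat.gcd q.1 q.2 : ℕ) : ℝ)
       = (((Icc 1 n ×ˢ Icc 1 n).filter (fun q => Nat.gcd q.1 q.2 = g)).card : ℝ) * g := by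
      rw [Finset.sum_congr rfl (g := fun _ => (g:ℝ))]
      · simp
      · intro q hq; simp only [mem_filter] at hq; rw [hq.2]
    rw [e1]
    have e2 : ((Icc 1 (n/g) ×ˢ Icc 1 (n/g)).filter (fun q => Nat.gcd q.1 q.2 = 1)).card ≤
       ((Icc 1 n ×ˢ Icc 1 n).filter (fun q => Nat.gcd q.1 q.2 = g)).card := by
      apply Finset.card_le_card_of_injOn (fun q => (g * q.1, g * q.2))
      · intro q hq
        simp only [coe_filter, mem_product, mem_Icc, Set.mem_ofPred_eq] at hq ⊢
        obtain ⟨⟨⟨h1, h2⟩, h3, h4⟩, h5⟩ := hq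
        have hle : ∀ x, x ≤ n/g → g * x ≤ n := fun x hx =>
          (Nat.mul_le_mul_left g hx).trans (Nat.mul_div_le n g)
        refine ⟨⟨⟨Nat.mul_pos hg.1 h1, hle _ h2⟩, Nat.mul_pos hg.1 h3, hle _ h4⟩, ?_⟩
        rw [Nat.gcd_mul_left, h5, mul_one]
      · intro q _ q' _ h
        simp only [Prod.mk.injEq] at h
        exact Prod.ext (Nat.eq_of_mul_eq_mul_left hg.1 h.1) (Nat.eq_of_mul_eq_mul_left hg.1 h.2)
    have e3 := coprime_count (n/g)
    have e2' : (((Icc 1 (n/g) ×ˢ Icc 1 (n/g)).filter (fun q => Nat.gcd q.1 q.2 = 1)).card : ℝ) ≤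
       (((Icc 1 n ×ˢ Icc 1 n).filter (fun q => Nat.gcd q.1 q.2 = g)).card : ℝ) := by exact_mod_cast e2
    have e4 : (n:ℝ) ≤ 2 * g * ((n/g : ℕ) : ℝ) := by
      have h1 : n/g ≥ 1 := (Nat.one_le_div_iff hg.1).mpr hg.2
      have h2 := Nat.div_add_mod n g
      have h3 := Nat.mod_lt n hg.1
      have : n ≤ 2 * g * (n/g) := by nlinarith
      exact_mod_cast this
    have hg0 : (0:ℝ) < g := by exact_mod_cast hg.1
    have e5 : (n:ℝ)^2 ≤ (2 * g * ((n/g : ℕ) : ℝ))^2 := by gcongr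
    calc (n:ℝ)^2/16 * (1/(g:ℝ)) ≤ (2 * g * ((n/g : ℕ) : ℝ))^2 /16 * (1/(g:ℝ)) := by gcongr
      _ = ((n/g : ℕ) : ℝ)^2/4 * g := by field_simp; ring
      _ ≤ _ := by gcongr; exact e3.trans e2'
  calc (n:ℝ)^2 * Real.log n / 16 = (n:ℝ)^2/16 * Real.log n := by ring
    _ ≤ (n:ℝ)^2/16 * ∑ g ∈ Icc 1 n, (1:ℝ)/g := by gcongr; exact harm_lower n hn
    _ = ∑ g ∈ Icc 1 n, (n:ℝ)^2/16 * (1/(g:ℝ)) := by rw [Finset.mul_sum]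
    _ ≤ _ := Finset.sum_le_sum key

lemma int_dvd_card (N g : ℕ) (hg : 1 ≤ g) (hgN : g ≤ N) :
    (((Icc (-(N:ℤ)) N).filter (fun a => (g:ℤ) ∣ a)).card : ℝ) ≤ 3 * N / g := by
  have h1 : ((Icc (-(N:ℤ)) N).filter (fun a => (g:ℤ) ∣ a)).card ≤
      (Icc (-((N/g : ℕ):ℤ)) ((N/g : ℕ) : ℤ)).card := by
    apply Finset.card_le_card_of_injOn (fun a : ℤ => a / (g:ℤ))
    · intro a ha
      simp only [coe_filter, mem_Icc, Set.mem_ofPred_eq, coe_Icc, Set.mem_Icc] at ha ⊢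
      obtain ⟨⟨h1, h2⟩, k, rfl⟩ := ha
      have hg0 : (0:ℤ) < g := by exact_mod_cast hg
      rw [Int.mul_ediv_cancel_left _ hg0.ne']
      push_cast
      constructor
      · have : -k ≤ (N:ℤ)/g := (Int.le_ediv_iff_mul_le hg0).mpr (by nlinarith)
        linarith
      · exact (Int.le_ediv_iff_mul_le hg0).mpr (by nlinarith)
    · intro a ha b hb h
      simp only [coe_filter, mem_Icc, Set.mem_ofPred_eq] at ha hb h
      rw [← Int.ediv_mul_cancel ha.2, ← Int.ediv_mul_cancel hb.2, h]
  have h2 : (Icc (-((N/g : ℕ):ℤ)) ((N/g : ℕ) : ℤ)).card = 2 * (N/g) + 1 := by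
    rw [Int.card_Icc]; omega
  rw [h2] at h1
  have h3 : 1 ≤ N/g := (Nat.one_le_div_iff hg).mpr hgN
  have h4 : ((N/g : ℕ):ℝ) ≤ N / g := Nat.cast_div_le
  calc _ ≤ ((3 * (N/g) : ℕ) : ℝ) := by exact_mod_cast (by omega)
    _ = 3 * ((N/g : ℕ):ℝ) := by push_cast; ring
    _ ≤ 3 * (N/g) := by gcongr
    _ = _ := by ring

lemma gcd_sum_upper (N : ℕ) :
    ((∑ q ∈ (Icc (-(N:ℤ)) N ×ˢ Icc (-(N:ℤ)) N), Int.gcd q.1 q.2 : ℕ) : ℝ)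
      ≤ 9 * (N:ℝ)^2 * (1 + Real.log N) := by
  have h1 : ∀ q ∈ (Icc (-(N:ℤ)) N ×ˢ Icc (-(N:ℤ)) N), Int.gcd q.1 q.2 ≤
      ∑ g ∈ Icc 1 N, if ((g:ℤ) ∣ q.1 ∧ (g:ℤ) ∣ q.2) then g else 0 := by
    intro q hq
    simp only [mem_product, mem_Icc] at hq
    rcases Nat.eq_zero_or_pos (Int.gcd q.1 q.2) with h | h
    · simp [h]
    have hm : Int.gcd q.1 q.2 ∈ Icc 1 N := by
      rw [mem_Icc]
      refine ⟨h, ?_⟩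
      by_cases h0 : q.1 = 0
      · have h00 : q.2 ≠ 0 := by rintro h00; rw [h0, h00] at h; simp at h
        have := Int.gcd_le_natAbs_right q.1 h00
        omega
      · have := Int.gcd_le_natAbs_left q.2 h0
        omega
    have := Finset.single_le_sum (f := fun g : ℕ => if ((g:ℤ) ∣ q.1 ∧ (g:ℤ) ∣ q.2) then g else 0)
      (fun i _ => Nat.zero_le _) hm
    simpa [Int.gcd_dvd_left, Int.gcd_dvd_right] using this
  have h2 := Finset.sum_le_sum h1
  rw [Finset.sum_comm] at h2
  have h2' : ((∑ q ∈ (Icc (-(N:ℤ)) N ×ˢ Icc (-(N:ℤ)) N), Int.gcd q.1 q.2 : ℕ) : ℝ) ≤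
    ((∑ g ∈ Icc 1 N, ∑ q ∈ (Icc (-(N:ℤ)) N ×ˢ Icc (-(N:ℤ)) N), (if ((g:ℤ) ∣ q.1 ∧ (g:ℤ) ∣ q.2) then g else 0) : ℕ) : ℝ) := by
    exact_mod_cast h2
  refine h2'.trans ?_
  rw [Nat.cast_sum]
  calc _ ≤ ∑ g ∈ Icc 1 N, 9 * (N:ℝ)^2 * (1/(g:ℝ)) := by
        apply Finset.sum_le_sum
        intro g hg
        rw [mem_Icc] at hg
        rw [← Finset.sum_filter, Finset.sum_const,
          Finset.filter_product (fun x : ℤ => (g:ℤ) ∣ x) (fun x : ℤ => (g:ℤ) ∣ x), Finset.card_product]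
        have := int_dvd_card N g hg.1 hg.2
        have hg0 : (0:ℝ) < g := by exact_mod_cast hg.1
        simp only [smul_eq_mul]
        push_cast
        calc _ ≤ (3 * N / g : ℝ) * (3 * N / g) * g := by gcongr
          _ = _ := by field_simp; ring
    _ = 9 * (N:ℝ)^2 * ∑ g ∈ Icc 1 N, (1:ℝ)/g := by rw [Finset.mul_sum]
    _ ≤ _ := by gcongr; exact harm_upper N

end Numeric

section WordNorm

variable {G : Type*} [Group G]

lemma exists_word (S : Finset G) (hS : Subgroup.closure (S : Set G) = ⊤) (g : G) :
    ∃ l : List G, l.length = wordNorm S g ∧ (∀ x ∈ l, x ∈ S ∨ x⁻¹ ∈ S) ∧ l.prod = g := by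
  have hne : {n | ∃ l : List G, l.length = n ∧ (∀ x ∈ l, x ∈ S ∨ x⁻¹ ∈ S) ∧ l.prod = g}.Nonempty := by
    have hg : g ∈ Subgroup.closure (S : Set G) := by rw [hS]; trivial
    suffices h : ∃ l : List G, (∀ x ∈ l, x ∈ S ∨ x⁻¹ ∈ S) ∧ l.prod = g by
      obtain ⟨l, h1, h2⟩ := h
      exact ⟨l.length, l, rfl, h1, h2⟩
    induction hg using Subgroup.closure_induction with
    | mem x hx => exact ⟨[x], by simpa using Or.inl hx, by simp⟩
    | one => exact ⟨[], by simp, by simp⟩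
    | mul x y _ _ hx hy =>
      obtain ⟨l, h1, h2⟩ := hx
      obtain ⟨l', h1', h2'⟩ := hy
      refine ⟨l ++ l', ?_, by simp [h2, h2']⟩
      intro x hx
      rcases List.mem_append.mp hx with h | h
      · exact h1 x h
      · exact h1' x h
    | inv x _ hx =>
      obtain ⟨l, h1, h2⟩ := hx
      refine ⟨(l.map (·⁻¹)).reverse, ?_, ?_⟩
      · intro y hy
        simp only [List.mem_reverse, List.mem_map] at hy
        obtain ⟨z, hz, rfl⟩ := hy
        rw [inv_inv]
        exact (h1 z hz).symm
      · rw [← List.prod_inv_reverse, h2]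
  exact Nat.sInf_mem hne

lemma wordNorm_mul (S : Finset G) (hS : Subgroup.closure (S : Set G) = ⊤) (g h : G) :
    wordNorm S (g * h) ≤ wordNorm S g + wordNorm S h := by
  obtain ⟨l, h1, h2, h3⟩ := exists_word S hS g
  obtain ⟨l', h1', h2', h3'⟩ := exists_word S hS h
  refine Nat.sInf_le ⟨l ++ l', by simp [h1, h1'], ?_, by simp [h3, h3']⟩
  intro x hx
  rcases List.mem_append.mp hx with h | h
  · exact h2 x h
  · exact h2' x h

lemma wordNorm_pow (S : Finset G) (hS : Subgroup.closure (S : Set G) = ⊤) (g : G) (n : ℕ) :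
    wordNorm S (g ^ n) ≤ n * wordNorm S g := by
  induction n with
  | zero =>
    have : wordNorm S (1:G) ≤ 0 := Nat.sInf_le ⟨[], by simp, by simp, by simp⟩
    simpa using this
  | succ n ih =>
    rw [pow_succ]
    have := wordNorm_mul S hS (g^n) g
    nlinarith

open Classical in
lemma ball_finite (S : Finset G) (hS : Subgroup.closure (S : Set G) = ⊤) (n : ℕ) :
    {g : G | wordNorm S g ≤ n}.Finite := by
  let T : Finset G := S ∪ S.image (·⁻¹)
  have hf := List.finite_length_le T n
  refine (hf.image (fun l => (l.map (fun x : T => (x : G))).prod)).subset ?_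
  intro g hg
  obtain ⟨l, h1, h2, h3⟩ := exists_word S hS g
  have hT : ∀ x ∈ l, x ∈ T := by
    intro x hx
    rcases h2 x hx with h | h
    · exact Finset.mem_union_left _ h
    · exact Finset.mem_union_right _ (Finset.mem_image.mpr ⟨x⁻¹, h, inv_inv x⟩)
  refine ⟨l.attach.map (fun x => ⟨x.1, hT x.1 x.2⟩), ?_, ?_⟩
  · have : wordNorm S g ≤ n := hg
    simp [h1, this]
  · simp [List.map_map, Function.comp_def, h3]

/-- A uniform bound for a function on the symmetrised generating set. -/
lemma gens_bound (S : Finset G) (f : G → ℤ) :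
    ∃ K : ℕ, ∀ x, (x ∈ S ∨ x⁻¹ ∈ S) → |f x| ≤ K := by
  refine ⟨∑ s ∈ S, ((f s).natAbs + (f s⁻¹).natAbs), ?_⟩
  rintro x (h | h)
  · have := Finset.single_le_sum (f := fun s => (f s).natAbs + (f s⁻¹).natAbs) (fun i _ => Nat.zero_le _) h
    have h2 := Int.natCast_natAbs (f x)
    omega
  · have := Finset.single_le_sum (f := fun s => (f s).natAbs + (f s⁻¹).natAbs) (fun i _ => Nat.zero_le _) h
    simp only [inv_inv] at this
    have h2 := Int.natCast_natAbs (f x)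
    omega

lemma gens_bound₂ (S : Finset G) (f : G → G → ℤ) :
    ∃ K : ℕ, ∀ x y, (x ∈ S ∨ x⁻¹ ∈ S) → (y ∈ S ∨ y⁻¹ ∈ S) → |f x y| ≤ K := by
  choose K hK using fun x => gens_bound S (f x)
  obtain ⟨L, hL⟩ := gens_bound S (fun x => (K x : ℤ))
  refine ⟨L, fun x y hx hy => (hK x y hy).trans ?_⟩
  have := hL x hx
  exact (le_abs_self _).trans this

lemma hom_bound (S : Finset G) (f : G → ℤ) (hf : ∀ x y, f (x * y) = f x + f y) (K : ℕ)
    (hK : ∀ x, (x ∈ S ∨ x⁻¹ ∈ S) → |f x| ≤ K) (l : List G) (hl : ∀ x ∈ l, x ∈ S ∨ x⁻¹ ∈ S) :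
    |f l.prod| ≤ K * l.length := by
  induction l with
  | nil =>
    have := hf 1 1
    simp only [mul_one, left_eq_add] at this
    simp [this]
  | cons x l ih =>
    rw [List.prod_cons, hf]
    have h1 := hK x (hl x (by simp))
    have h2 := ih (fun y hy => hl y (by simp [hy]))
    have := abs_add_le (f x) (f l.prod)
    push_cast [List.length_cons]
    linarith

lemma bihom_bound (S : Finset G) (f : G → G → ℤ) (hf1 : ∀ x y z, f (x * y) z = f x z + f y z)
    (hf2 : ∀ x y z, f x (y * z) = f x y + f x z) :
    ∃ K : ℕ, ∀ l l' : List G, (∀ x ∈ l, x ∈ S ∨ x⁻¹ ∈ S) → (∀ x ∈ l', x ∈ S ∨ x⁻¹ ∈ S) →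
      |f l.prod l'.prod| ≤ K * l.length * l'.length := by
  obtain ⟨K, hK⟩ := gens_bound₂ S f
  refine ⟨K, fun l l' hl hl' => ?_⟩
  have h1 : ∀ x, (x ∈ S ∨ x⁻¹ ∈ S) → |f x l'.prod| ≤ (K * l'.length : ℕ) := by
    intro x hx
    have := hom_bound S (f x) (hf2 x) K (fun y hy => hK x y hx hy) l' hl'
    exact_mod_cast this
  have := hom_bound S (fun x => f x l'.prod) (fun x y => hf1 x y _) _ h1 l hl
  push_cast at this
  calc _ ≤ _ := this
    _ = _ := by ring

lemma quad_bound (S : Finset G) (z : G → ℤ) (f : G → G → ℤ)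
    (hz : ∀ x y, z (x * y) = z x + z y + f x y)
    (hf1 : ∀ x y z, f (x * y) z = f x z + f y z)
    (hf2 : ∀ x y z, f x (y * z) = f x y + f x z) :
    ∃ K : ℕ, ∀ l : List G, (∀ x ∈ l, x ∈ S ∨ x⁻¹ ∈ S) → |z l.prod| ≤ K * (l.length:ℤ)^2 := by
  obtain ⟨K1, hK1⟩ := gens_bound S z
  obtain ⟨K2, hK2⟩ := bihom_bound S f hf1 hf2
  refine ⟨K1 + K2, fun l hl => ?_⟩
  induction l with
  | nil =>
    have h1 := hz 1 1
    have h2 := hf1 1 1 1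
    simp only [mul_one] at h1 h2
    have : z 1 = 0 := by linarith
    simp [this]
  | cons x l ih =>
    have hx := hl x (by simp)
    have hl' : ∀ y ∈ l, y ∈ S ∨ y⁻¹ ∈ S := fun y hy => hl y (by simp [hy])
    have h1 := ih hl'
    have h2 := hK2 [x] l (by simpa using hx) hl'
    have h3 := hK1 x hx
    simp only [List.prod_singleton, List.length_singleton] at h2
    rw [List.prod_cons, hz]
    have h4 := abs_add_le (z x + z l.prod) (f x l.prod)
    have h5 := abs_add_le (z x) (z l.prod)
    push_cast [List.length_cons] at *
    have : (0:ℤ) ≤ l.length := by positivity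
    have : (0:ℤ) ≤ K1 := by positivity
    have : (0:ℤ) ≤ K2 := by positivity
    have : (0:ℤ) ≤ K1 * l.length := by positivity
    have : (0:ℤ) ≤ K2 * l.length := by positivity
    nlinarith

end WordNorm

/-- Coordinates on a generalised Heisenberg group, with a distinguished hyperbolic plane. -/
structure HData (G : Type*) [Group G] (m : ℕ) where
  Φ : G ≃ (Fin m → ℤ) × ℤ
  a : (Fin m → ℤ) →ₗ[ℤ] ℤ
  b : (Fin m → ℤ) →ₗ[ℤ] ℤ
  u : Fin m → ℤ
  v : Fin m → ℤ
  au : a u = 1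
  av : a v = 0
  bu : b u = 0
  bv : b v = 1
  d : ℤ
  hd : 0 < d
  β : (Fin m → ℤ) →ₗ[ℤ] (Fin m → ℤ) →ₗ[ℤ] ℤ
  p : (Fin m → ℤ) →ₗ[ℤ] (Fin m → ℤ)
  hp : ∀ x, p x = x - a x • u - b x • v
  mul1 : ∀ g h, (Φ (g * h)).1 = (Φ g).1 + (Φ h).1
  mul2 : ∀ g h, (Φ (g * h)).2 = (Φ g).2 + (Φ h).2 +
    (d * a (Φ g).1 * b (Φ h).1 + β (p (Φ g).1) (p (Φ h).1))

namespace HData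

variable {G : Type*} [Group G] {m : ℕ} (D : HData G m)

lemma ap (x) : D.a (D.p x) = 0 := by
  rw [D.hp]; simp only [map_sub, map_smul, D.au, D.av, smul_eq_mul]; ring
lemma bp (x) : D.b (D.p x) = 0 := by
  rw [D.hp]; simp only [map_sub, map_smul, D.bu, D.bv, smul_eq_mul]; ring
lemma pp (x) : D.p (D.p x) = D.p x := by rw [D.hp (D.p x), D.ap, D.bp]; simp
lemma pu : D.p D.u = 0 := by simp [D.hp, D.au, D.bu]
lemma pv : D.p D.v = 0 := by simp [D.hp, D.av, D.bv]

/-- The linear involution. -/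
def A (x : Fin m → ℤ) : Fin m → ℤ := x - (2:ℤ) • D.p x

lemma pA (x) : D.p (D.A x) = - D.p x := by
  simp only [A, map_sub, map_smul, D.pp]; module
lemma aA (x) : D.a (D.A x) = D.a x := by
  simp only [A, map_sub, map_smul, D.ap, smul_zero, sub_zero]
lemma bA (x) : D.b (D.A x) = D.b x := by
  simp only [A, map_sub, map_smul, D.bp, smul_zero, sub_zero]
lemma AA (x) : D.A (D.A x) = x := by
  rw [A, D.pA]; simp only [A]; module
lemma A_add (x y) : D.A (x + y) = D.A x + D.A y := by
  simp only [A, map_add]; module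

/-- The automorphism. -/
def ψ : G ≃* G where
  toFun g := D.Φ.symm (D.A (D.Φ g).1, (D.Φ g).2)
  invFun g := D.Φ.symm (D.A (D.Φ g).1, (D.Φ g).2)
  left_inv g := by simp [D.AA]
  right_inv g := by simp [D.AA]
  map_mul' g h := by
    apply D.Φ.injective
    apply Prod.ext
    · simp [D.mul1, D.A_add]
    · simp [D.mul2, D.pA, D.aA, D.bA]

lemma Φψ (g : G) : D.Φ (D.ψ g) = (D.A (D.Φ g).1, (D.Φ g).2) := by
  simp [ψ]

lemma twisted_iff (x y : G) : TwistedConj D.ψ x y ↔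
    ∃ w : Fin m → ℤ, (D.Φ y).1 = (D.Φ x).1 + (2:ℤ) • D.p w ∧
      (D.Φ y).2 = (D.Φ x).2 + D.d * (D.a w * D.b (D.Φ x).1 - D.a (D.Φ x).1 * D.b w)
        + D.β (D.p w) (D.p (D.Φ x).1) + D.β (D.p (D.Φ x).1) (D.p w)
        + 2 * D.β (D.p w) (D.p w) := by
  have key : ∀ g : G, g * x * (D.ψ g)⁻¹ = y ↔
      ((D.Φ y).1 = (D.Φ x).1 + (2:ℤ) • D.p (D.Φ g).1 ∧
      (D.Φ y).2 = (D.Φ x).2 + D.d * (D.a (D.Φ g).1 * D.b (D.Φ x).1 - D.a (D.Φ x).1 * D.b (D.Φ g).1)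
        + D.β (D.p (D.Φ g).1) (D.p (D.Φ x).1) + D.β (D.p (D.Φ x).1) (D.p (D.Φ g).1)
        + 2 * D.β (D.p (D.Φ g).1) (D.p (D.Φ g).1)) := by
    intro g
    rw [mul_inv_eq_iff_eq_mul, ← D.Φ.injective.eq_iff, Prod.ext_iff]
    simp only [D.mul1, D.mul2, D.Φψ, D.pA, D.bA]
    have h1 : (D.Φ g).1 + (D.Φ x).1 = (D.Φ y).1 + D.A (D.Φ g).1 ↔
       (D.Φ y).1 = (D.Φ x).1 + (2:ℤ) • D.p (D.Φ g).1 := by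
      simp only [A]
      constructor
      · intro h
        have : (D.Φ y).1 = (D.Φ g).1 + (D.Φ x).1 - ((D.Φ g).1 - (2:ℤ) • D.p (D.Φ g).1) := by
          rw [h]; module
        rw [this]; module
      · intro h; rw [h]; module
    rw [h1]
    apply and_congr_right
    intro h
    rw [h]
    simp only [map_add, map_smul, map_neg, D.ap, D.pp, LinearMap.add_apply, LinearMap.smul_apply,
      smul_eq_mul]
    constructor <;> intro h' <;> linarith
  constructor
  · rintro ⟨g, hg⟩
    exact ⟨_, (key g).mp hg⟩
  · rintro ⟨w, hw⟩
    refine ⟨D.Φ.symm (w, 0), (key _).mpr ?_⟩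
    simpa using hw

lemma class_eq_iff (ψ : G ≃* G) (x y : G) :
    ({t | TwistedConj ψ x t} = {t | TwistedConj ψ y t}) ↔ TwistedConj ψ x y := by
  constructor
  · intro h
    have : y ∈ {t | TwistedConj ψ y t} := ⟨1, by simp⟩
    rw [← h] at this
    exact this
  · rintro ⟨g, rfl⟩
    ext t
    constructor
    · rintro ⟨k, rfl⟩
      exact ⟨k * g⁻¹, by simp [mul_assoc]⟩
    · rintro ⟨k, rfl⟩
      exact ⟨k * g, by simp [mul_assoc]⟩

/-- The quadratic invariant. -/
def F (x : G) : ℤ := 2 * (D.Φ x).2 - D.β (D.p (D.Φ x).1) (D.p (D.Φ x).1)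

/-- Full invariant of twisted classes. -/
def I (x : G) : (ℤ × ℤ) × (Fin m → ZMod 2) × ℤ :=
  ((D.a (D.Φ x).1, D.b (D.Φ x).1), (fun i => ((D.p (D.Φ x).1 i : ℤ) : ZMod 2)),
    D.F x % (2 * D.d * (Int.gcd (D.a (D.Φ x).1) (D.b (D.Φ x).1) : ℤ)))

lemma conj_of_I (x y : G) (h : D.I x = D.I y) : TwistedConj D.ψ x y := by
  simp only [I, Prod.mk.injEq] at h
  obtain ⟨⟨ha, hb⟩, hp, hF⟩ := h
  rw [← ha, ← hb] at hF
  set X := (D.Φ x).1 with hX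
  set Y := (D.Φ y).1 with hY
  have h2 : ∀ i, ∃ k : ℤ, D.p Y i = D.p X i + 2 * k := by
    intro i
    have := congrFun hp i
    rw [ZMod.intCast_eq_intCast_iff_dvd_sub] at this
    obtain ⟨k, hk⟩ := this
    exact ⟨k, by push_cast at hk; linarith⟩
  choose k hk using h2
  have h3 : D.p Y = D.p X + (2:ℤ) • k := by
    ext i; simp [hk]
  have h4 : D.p Y = D.p X + (2:ℤ) • D.p k := by
    have := congrArg D.p h3
    simpa only [D.pp, map_add, map_smul] using this
  have h5 : (2 * D.d * (Int.gcd (D.a X) (D.b X) : ℤ)) ∣ D.F y - D.F x :=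
    Int.ModEq.dvd hF
  obtain ⟨e, he⟩ := h5
  have hbez := Int.gcd_eq_gcd_ab (D.a X) (D.b X)
  set i := e * Int.gcdB (D.a X) (D.b X) with hi
  set j := - (e * Int.gcdA (D.a X) (D.b X)) with hj
  rw [D.twisted_iff]
  refine ⟨i • D.u + j • D.v + D.p k, ?_, ?_⟩
  · simp only [map_add, map_smul, D.pu, D.pv, D.pp, smul_zero, zero_add]
    rw [← hX, ← hY]
    have hY' : Y = D.p Y + D.a Y • D.u + D.b Y • D.v := by rw [D.hp]; module
    have hX' : X = D.p X + D.a X • D.u + D.b X • D.v := by rw [D.hp]; module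
    rw [hY', h4, ← ha, ← hb]
    conv_rhs => rw [hX']
    module
  · simp only [map_add, map_smul, D.pu, D.pv, D.pp, smul_zero, zero_add, D.au, D.av, D.bu, D.bv,
      D.ap, D.bp, smul_eq_mul, mul_one, mul_zero, add_zero]
    simp only [F] at he
    rw [← hX, ← hY, h4] at he
    simp only [map_add, map_smul, LinearMap.add_apply, LinearMap.smul_apply, smul_eq_mul] at he
    rw [← hX]
    rw [hbez] at he
    have : i * D.b X - D.a X * j = e * (D.a X * Int.gcdA (D.a X) (D.b X) + D.b X * Int.gcdB (D.a X) (D.b X)) := by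
      rw [hi, hj]; ring
    rw [this]
    linarith

open Finset in
lemma growth_upper (S : Finset G) (hS : Subgroup.closure (S : Set G) = ⊤) :
    ∃ K : ℕ, ∀ n : ℕ, (twistedGrowth D.ψ S n : ℝ) ≤
      2 ^ m * (2 * K * (n:ℝ)^2 + 1 + 2 * D.d * (9 * ((K * n : ℕ):ℝ)^2 * (1 + Real.log (K * n : ℕ)))) := by
  obtain ⟨Ka, hKa⟩ := gens_bound S (fun g => D.a (D.Φ g).1)
  obtain ⟨Kb, hKb⟩ := gens_bound S (fun g => D.b (D.Φ g).1)
  obtain ⟨Kp, hKp⟩ := bihom_bound S (fun g h => D.β (D.p (D.Φ g).1) (D.p (D.Φ h).1))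
    (fun x y z => by simp [D.mul1]) (fun x y z => by simp [D.mul1])
  obtain ⟨Kz, hKz⟩ := quad_bound S (fun g => (D.Φ g).2)
    (fun g h => D.d * D.a (D.Φ g).1 * D.b (D.Φ h).1 + D.β (D.p (D.Φ g).1) (D.p (D.Φ h).1))
    D.mul2 (fun x y z => by simp [D.mul1]; ring) (fun x y z => by simp [D.mul1]; ring)
  set K := Ka + Kb + 2 * Kz + Kp with hK
  refine ⟨K, fun n => ?_⟩
  let box : Finset (ℤ × ℤ) := Icc (-((K * n : ℕ):ℤ)) (K * n : ℕ) ×ˢ Icc (-((K * n : ℕ):ℤ)) (K * n : ℕ)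
  let T : ℤ × ℤ → Finset ℤ := fun q => if q = 0 then Icc (-((K * n^2 : ℕ):ℤ)) (K * n^2 : ℕ)
    else Ico 0 (2 * D.d * (Int.gcd q.1 q.2 : ℤ))
  let U : Finset ((ℤ × ℤ) × (Fin m → ZMod 2) × ℤ) :=
    box.biUnion (fun q => ({q} : Finset (ℤ × ℤ)) ×ˢ ((Finset.univ : Finset (Fin m → ZMod 2)) ×ˢ T q))
  have hsub : ∀ g : G, wordNorm S g ≤ n → D.I g ∈ U := by
    intro g hg
    obtain ⟨l, h1, h2, h3⟩ := exists_word S hS g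
    have hln : (l.length : ℤ) ≤ n := by rw [h1]; exact_mod_cast hg
    have ha := hom_bound S (fun g => D.a (D.Φ g).1) (fun x y => by simp [D.mul1]) Ka hKa l h2
    have hb := hom_bound S (fun g => D.b (D.Φ g).1) (fun x y => by simp [D.mul1]) Kb hKb l h2
    have hz := hKz l h2
    have hp := hKp l l h2 h2
    simp only [h3] at ha hb hz hp
    have ha' : |D.a (D.Φ g).1| ≤ K * n := ha.trans (by rw [hK]; push_cast; gcongr; linarith)
    have hb' : |D.b (D.Φ g).1| ≤ K * n := hb.trans (by rw [hK]; push_cast; gcongr; linarith)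
    have hF : |D.F g| ≤ K * n^2 := by
      have e1 := abs_sub (2 * (D.Φ g).2) (D.β (D.p (D.Φ g).1) (D.p (D.Φ g).1))
      rw [abs_mul] at e1
      have e2 : ((l.length:ℤ))^2 ≤ (n:ℤ)^2 := by gcongr
      have e3 : |D.F g| ≤ 2 * (Kz * (l.length:ℤ)^2) + Kp * (l.length:ℤ)^2 := by
        rw [F]
        have : |(2:ℤ)| = 2 := rfl
        rw [this] at e1
        nlinarith
      have e4 : (2 * Kz + Kp : ℤ) ≤ K := by rw [hK]; push_cast; linarith
      calc _ ≤ _ := e3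
        _ = (2 * Kz + Kp : ℤ) * (l.length:ℤ)^2 := by ring
        _ ≤ _ := by gcongr
    rw [abs_le] at ha' hb' hF
    simp only [U, mem_biUnion, mem_product, mem_singleton, mem_univ, true_and]
    refine ⟨(D.I g).1, ?_, rfl, ?_⟩
    · simp only [box, I, mem_product, mem_Icc]
      push_cast
      exact ⟨ha', hb'⟩
    · simp only [T, I]
      split_ifs with h0
      · rw [Prod.mk_eq_zero] at h0
        rw [h0.1, h0.2, mem_Icc]
        push_cast
        simpa using hF
      · rw [mem_Ico]
        have hg0 : 0 < (Int.gcd (D.a (D.Φ g).1) (D.b (D.Φ g).1) : ℤ) := by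
          rw [Prod.mk_eq_zero] at h0
          have : Int.gcd (D.a (D.Φ g).1) (D.b (D.Φ g).1) ≠ 0 := by rwa [Ne, Int.gcd_eq_zero_iff]
          omega
        have hpos : 0 < 2 * D.d * (Int.gcd (D.a (D.Φ g).1) (D.b (D.Φ g).1) : ℤ) := by
          have := D.hd
          positivity
        exact ⟨Int.emod_nonneg _ hpos.ne', Int.emod_lt_of_pos _ hpos⟩
  have hcard : twistedGrowth D.ψ S n ≤ U.card := by
    have hfin := ball_finite S hS n
    let C : G → Set G := fun x => {y | TwistedConj D.ψ x y}
    have hchoose : ∀ c ∈ C '' {g : G | wordNorm S g ≤ n}, ∃ g, wordNorm S g ≤ n ∧ C g = c := by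
      rintro c ⟨g, hg, rfl⟩; exact ⟨g, hg, rfl⟩
    choose! r hr1 hr2 using hchoose
    rw [← Set.ncard_coe_finset U]
    apply Set.ncard_le_ncard_of_injOn (fun c => D.I (r c))
    · intro c hc
      exact hsub _ (hr1 c hc)
    · intro c hc c' hc' h
      rw [← hr2 c hc, ← hr2 c' hc']
      exact (class_eq_iff D.ψ _ _).mpr (D.conj_of_I _ _ h)
  have hT : ∀ q, ((T q).card : ℝ) ≤ (if q = 0 then 2 * K * (n:ℝ)^2 + 1 else 0) + 2 * D.d * (Int.gcd q.1 q.2 : ℝ) := by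
    intro q
    have hd := D.hd
    simp only [T]
    split_ifs with h0
    · rw [Int.card_Icc]
      have : ((((K * n^2 : ℕ):ℤ) + 1 - (-((K * n^2 : ℕ):ℤ))).toNat) = 2 * (K * n^2) + 1 := by omega
      rw [this]
      subst h0
      push_cast
      simp
      linarith
    · rw [Int.card_Ico]
      have : (((2 * D.d * (Int.gcd q.1 q.2 : ℤ) - 0).toNat : ℤ) : ℝ) = 2 * D.d * (Int.gcd q.1 q.2 : ℝ) := by
        rw [sub_zero, Int.toNat_of_nonneg (by positivity)]
        push_cast; ring
      rw [Int.cast_natCast] at this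
      rw [this]; simp
  have hU : (U.card : ℝ) ≤ ∑ q ∈ box, (2:ℝ)^m * ((if q = 0 then 2 * K * (n:ℝ)^2 + 1 else 0) + 2 * D.d * (Int.gcd q.1 q.2 : ℝ)) := by
    have h1 : U.card ≤ ∑ q ∈ box, 2^m * (T q).card := by
      refine card_biUnion_le.trans (le_of_eq ?_)
      apply sum_congr rfl
      intro q _
      rw [card_product, card_product]
      simp [ZMod.card]
    calc (U.card : ℝ) ≤ ((∑ q ∈ box, 2^m * (T q).card : ℕ) : ℝ) := by exact_mod_cast h1
      _ = ∑ q ∈ box, 2^m * ((T q).card : ℝ) := by push_cast; rfl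
      _ ≤ _ := by
        apply sum_le_sum
        intro q _
        gcongr
        exact hT q
  have hg := gcd_sum_upper (K * n)
  rw [Nat.cast_sum] at hg
  have hd : (0:ℝ) < D.d := by exact_mod_cast D.hd
  calc (twistedGrowth D.ψ S n : ℝ) ≤ U.card := by exact_mod_cast hcard
    _ ≤ _ := hU
    _ = 2^m * ((∑ q ∈ box, (if q = 0 then 2 * K * (n:ℝ)^2 + 1 else 0)) + 2 * D.d * ∑ q ∈ box, (Int.gcd q.1 q.2 : ℝ)) := by
        rw [← mul_sum, sum_add_distrib, ← mul_sum]
    _ ≤ _ := by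
        gcongr
        rw [sum_ite_eq']
        split_ifs
        · exact le_rfl
        · positivity

lemma Φ_one : D.Φ (1:G) = (0, 0) := by
  have h1 := D.mul1 1 1
  have h2 := D.mul2 1 1
  rw [mul_one] at h1 h2
  have h3 : (D.Φ 1).1 = 0 := by simpa using h1
  rw [h3] at h2
  simp at h2
  exact Prod.ext h3 h2

lemma Φ_pow (x : Fin m → ℤ) (t : ℤ) (hb : D.b x = 0 ∨ D.a x = 0) (hp : D.p x = 0) (s : ℕ) :
    D.Φ ((D.Φ.symm (x, t)) ^ s) = ((s:ℤ) • x, (s:ℤ) * t) := by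
  induction s with
  | zero => simp [D.Φ_one]
  | succ s ih =>
    rw [pow_succ]
    apply Prod.ext
    · rw [D.mul1, ih, Equiv.apply_symm_apply]; push_cast; module
    · rw [D.mul2, ih, Equiv.apply_symm_apply]
      simp only [map_smul, hp, map_zero, add_zero, smul_eq_mul]
      rcases hb with h | h <;> rw [h] <;> push_cast <;> ring

open Finset in
lemma growth_lower (S : Finset G) (hS : Subgroup.closure (S : Set G) = ⊤) :
    ∃ K : ℕ, ∀ n : ℕ, ∀ N, K * n ≤ N →
      (n:ℝ)^2 * Real.log n / 16 ≤ (twistedGrowth D.ψ S N : ℝ) := by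
  set e := D.Φ.symm (D.u, 0) with he
  set f := D.Φ.symm (D.v, 0) with hf
  set c := D.Φ.symm (0, 1) with hc
  have hepow : ∀ s : ℕ, D.Φ (e ^ s) = ((s:ℤ) • D.u, (s:ℤ) * 0) :=
    D.Φ_pow _ _ (Or.inl D.bu) D.pu
  have hfpow : ∀ s : ℕ, D.Φ (f ^ s) = ((s:ℤ) • D.v, (s:ℤ) * 0) :=
    D.Φ_pow _ _ (Or.inr D.av) D.pv
  have hcpow : ∀ s : ℕ, D.Φ (c ^ s) = ((s:ℤ) • 0, (s:ℤ) * 1) :=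
    D.Φ_pow _ _ (Or.inl (map_zero _)) (map_zero _)
  let X : (Σ _ : ℕ × ℕ, ℕ) → G := fun q => f ^ q.1.2 * e ^ q.1.1 * c ^ q.2
  have hX1 : ∀ q, (D.Φ (X q)).1 = (q.1.2:ℤ) • D.v + (q.1.1:ℤ) • D.u := by
    intro q
    simp only [X, D.mul1, hepow, hfpow, hcpow, smul_zero, add_zero]
  have hX2 : ∀ q, (D.Φ (X q)).2 = q.2 := by
    intro q
    simp only [X, D.mul1, D.mul2, hepow, hfpow, hcpow, smul_zero, add_zero, map_smul, map_add, D.av, D.pv,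
      D.pu, map_zero]
    simp
  have haX : ∀ q, D.a (D.Φ (X q)).1 = q.1.1 := by
    intro q; rw [hX1, map_add, map_smul, map_smul, D.av, D.au]; simp
  have hbX : ∀ q, D.b (D.Φ (X q)).1 = q.1.2 := by
    intro q; rw [hX1, map_add, map_smul, map_smul, D.bv, D.bu]; simp
  have hpX : ∀ q, D.p (D.Φ (X q)).1 = 0 := by
    intro q; rw [hX1, map_add, map_smul, map_smul, D.pv, D.pu]; simp
  refine ⟨wordNorm S e + wordNorm S f + wordNorm S c, fun n N hN => ?_⟩
  let P : Finset (Σ _ : ℕ × ℕ, ℕ) := (Icc 1 n ×ˢ Icc 1 n).sigma (fun q => range (Nat.gcd q.1 q.2))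
  have hP : P.card = ∑ q ∈ Icc 1 n ×ˢ Icc 1 n, Nat.gcd q.1 q.2 := by
    simp [P, card_sigma]
  have hle : P.card ≤ twistedGrowth D.ψ S N := by
    rw [← Set.ncard_coe_finset P]
    have hfin := (ball_finite S hS N).image (fun x => {y | TwistedConj D.ψ x y})
    refine Set.ncard_le_ncard_of_injOn (fun q => {y | TwistedConj D.ψ (X q) y}) ?_ ?_ hfin
    · intro q hq
      refine ⟨X q, ?_, rfl⟩
      have hq' : q ∈ P := hq
      simp only [P, mem_sigma, mem_product, mem_Icc, mem_range] at hq'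
      obtain ⟨⟨⟨h1, h2⟩, h3, h4⟩, h5⟩ := hq'
      have h6 : q.2 ≤ n := (h5.le.trans (Nat.gcd_le_left _ (by omega))).trans h2
      have w1 := wordNorm_mul S hS (f ^ q.1.2 * e ^ q.1.1) (c ^ q.2)
      have w2 := wordNorm_mul S hS (f ^ q.1.2) (e ^ q.1.1)
      have w3 := (wordNorm_pow S hS f q.1.2).trans (Nat.mul_le_mul_right _ h4)
      have w4 := (wordNorm_pow S hS e q.1.1).trans (Nat.mul_le_mul_right _ h2)
      have w5 := (wordNorm_pow S hS c q.2).trans (Nat.mul_le_mul_right _ h6)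
      show wordNorm S (X q) ≤ N
      simp only [X]
      nlinarith
    · intro q hq q' hq' h
      have hq : q ∈ P := hq
      have hq' : q' ∈ P := hq'
      simp only [P, mem_sigma, mem_product, mem_Icc, mem_range] at hq hq'
      have h := (class_eq_iff D.ψ _ _).mp h
      rw [D.twisted_iff] at h
      obtain ⟨w, h1, h2⟩ := h
      have ea := congrArg D.a h1
      have eb := congrArg D.b h1
      have ep := congrArg D.p h1
      rw [map_add, map_smul, D.ap, haX, haX] at ea
      rw [map_add, map_smul, D.bp, hbX, hbX] at eb
      rw [map_add, map_smul, D.pp, hpX, hpX, zero_add] at ep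
      have ep' : D.p w = 0 := (smul_eq_zero.mp ep.symm).resolve_left (by norm_num)
      rw [hX2, hX2, ep', haX, hbX] at h2
      simp only [map_zero, mul_zero, add_zero, LinearMap.zero_apply] at h2
      obtain ⟨⟨s, t⟩, r⟩ := q
      obtain ⟨⟨s', t'⟩, r'⟩ := q'
      simp only [smul_zero, add_zero, Nat.cast_inj] at *
      subst ea eb
      have hdvd : ((Nat.gcd s' t' : ℕ) : ℤ) ∣ (r':ℤ) - r := by
        have : (r':ℤ) - r = D.d * (D.a w * t' - s' * D.b w) := by linarith
        rw [this]
        apply Dvd.dvd.mul_left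
        apply dvd_sub
        · exact Dvd.dvd.mul_left (by exact_mod_cast Nat.gcd_dvd_right s' t') _
        · exact Dvd.dvd.mul_right (by exact_mod_cast Nat.gcd_dvd_left s' t') _
      have hlt : |(r':ℤ) - r| < ((Nat.gcd s' t' : ℕ) : ℤ) := by
        rw [abs_lt]; omega
      have := Int.eq_zero_of_abs_lt_dvd hdvd hlt
      have : r = r' := by omega
      rw [this]
  refine (gcd_sum_lower n).trans ?_
  rw [← hP]
  exact_mod_cast hle

lemma growth_equiv (S : Finset G) (hS : Subgroup.closure (S : Set G) = ⊤) :
    GrowthEquiv (fun n => (twistedGrowth D.ψ S n : ℝ)) (fun n => (n : ℝ) ^ 2 * Real.log n) := by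
  constructor
  · obtain ⟨K, hK⟩ := D.growth_upper S hS
    set d := D.d.toNat with hd
    have hdd : (D.d : ℝ) = d := by
      have h := Int.toNat_of_nonneg D.hd.le
      rw [← hd] at h
      exact_mod_cast h.symm
    rw [hdd] at hK
    set c : ℕ := 3 + K + 2^m * (2 * K + 1 + 36 * d) with hc
    have hc3 : 3 ≤ c := by omega
    have hcK : K ≤ c := by omega
    refine ⟨c, by omega, fun n => ?_⟩
    have hc1 : (1:ℝ) ≤ c := by exact_mod_cast (by omega : 1 ≤ c)
    apply max_le
    · calc (1:ℝ) = 1 * 1 := by ring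
        _ ≤ c * _ := by gcongr; exact le_max_left _ _
    rcases Nat.eq_zero_or_pos n with rfl | hn
    · refine (hK 0).trans ?_
      calc _ = (2:ℝ)^m * 1 := by simp
        _ ≤ c * 1 := by
          have : 2^m ≤ c := by
            have := Nat.le_mul_of_pos_right (2^m) (show 0 < 2 * K + 1 + 36 * d by omega)
            omega
          have h : ((2^m : ℕ) : ℝ) ≤ c := by exact_mod_cast this
          push_cast at h
          linarith
        _ ≤ _ := by gcongr; exact le_max_left _ _
    · refine (hK n).trans ?_
      have hn1 : (1:ℝ) ≤ n := by exact_mod_cast hn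
      set L := Real.log ((c * n : ℕ) : ℝ) with hL
      have hL1 : 1 ≤ L := by
        have h3 : (3:ℝ) ≤ ((c * n : ℕ) : ℝ) := by exact_mod_cast (by nlinarith : 3 ≤ c * n)
        rw [hL, Real.le_log_iff_exp_le (by linarith)]
        exact (Real.exp_one_lt_d9.le.trans (by norm_num)).trans h3
      have hLK : Real.log ((K * n : ℕ) : ℝ) ≤ L := by
        rcases Nat.eq_zero_or_pos (K * n) with h0 | h0
        · rw [h0]; simp; linarith
        · apply Real.log_le_log (by exact_mod_cast h0)
          exact_mod_cast Nat.mul_le_mul_right n hcK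
      have hKc : ((K * n : ℕ) : ℝ) ≤ ((c * n : ℕ) : ℝ) := by exact_mod_cast Nat.mul_le_mul_right n hcK
      have hnc : (n : ℝ) ≤ ((c * n : ℕ) : ℝ) := by exact_mod_cast (by nlinarith : n ≤ c * n)
      set R := ((c * n : ℕ) : ℝ) with hR
      have hR1 : 1 ≤ R^2 * L := by nlinarith
      have hRL : R^2 ≤ R^2 * L := by nlinarith [sq_nonneg R]
      have hcc : (2:ℝ)^m * (2 * K + 1 + 36 * d) ≤ c := by rw [hc]; push_cast; nlinarith [(Nat.cast_nonneg K : (0:ℝ) ≤ K)]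
      calc _ ≤ (2:ℝ)^m * (2 * K * R^2 + R^2 * L + 2 * d * (9 * R^2 * (L + L))) := by
            gcongr
        _ ≤ (2:ℝ)^m * (2 * K * (R^2 * L) + R^2 * L + 2 * d * (9 * R^2 * (L + L))) := by gcongr
        _ = (2:ℝ)^m * (2 * K + 1 + 36 * d) * (R^2 * L) := by ring
        _ ≤ c * (R^2 * L) := by gcongr
        _ ≤ _ := by gcongr; exact le_max_right _ _
  · obtain ⟨K, hK⟩ := D.growth_lower S hS
    refine ⟨K + 16, by omega, fun n => ?_⟩
    have h := hK n ((K + 16) * n) (by nlinarith)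
    push_cast
    have hm : (1:ℝ) ≤ max 1 (twistedGrowth D.ψ S ((K + 16) * n) : ℝ) := le_max_left _ _
    have hm2 : (twistedGrowth D.ψ S ((K + 16) * n) : ℝ) ≤ max 1 (twistedGrowth D.ψ S ((K + 16) * n) : ℝ) :=
      le_max_right _ _
    have hK0 : (0:ℝ) ≤ K := Nat.cast_nonneg K
    apply max_le <;> nlinarith

end HData

section Algebra

open scoped commutatorElement

variable {G : Type*} [Group G]

lemma exists_proj (hfg : Group.FG G) (G2 : Subgroup G) [G2.Normal]
    (hG2 : ∀ g : G, g ∈ G2 ↔ ∃ n : ℕ, 0 < n ∧ g ^ n ∈ commutator G) :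
    ∃ (m : ℕ) (π : G → (Fin m → ℤ)), Function.Surjective π ∧ (∀ g h, π (g * h) = π g + π h) ∧
      ∀ g, π g = 0 ↔ g ∈ G2 := by
  have hcomm : ∀ x y : G ⧸ G2, x * y = y * x := by
    intro x y
    obtain ⟨g, rfl⟩ := QuotientGroup.mk_surjective x
    obtain ⟨h, rfl⟩ := QuotientGroup.mk_surjective y
    rw [← QuotientGroup.mk_mul, ← QuotientGroup.mk_mul, QuotientGroup.eq, hG2]
    refine ⟨1, one_pos, ?_⟩
    have : (g * h)⁻¹ * (h * g) = ⁅h⁻¹, g⁻¹⁆ := by rw [commutatorElement_def]; group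
    rw [pow_one, this]
    exact Subgroup.commutator_mem_commutator (Subgroup.mem_top _) (Subgroup.mem_top _)
  let : CommGroup (G ⧸ G2) := { (inferInstance : Group (G ⧸ G2)) with mul_comm := hcomm }
  have htors : ∀ (x : G ⧸ G2) (n : ℕ), n ≠ 0 → x ^ n = 1 → x = 1 := by
    intro x n hn hx
    obtain ⟨g, rfl⟩ := QuotientGroup.mk_surjective x
    rw [← QuotientGroup.mk_pow, QuotientGroup.eq_one_iff, hG2] at hx
    rw [QuotientGroup.eq_one_iff, hG2]
    obtain ⟨k, hk, hk'⟩ := hx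
    exact ⟨n * k, by positivity, by rwa [pow_mul]⟩
  have : IsMulTorsionFree (G ⧸ G2) := ⟨by
    intro n hn x y hxy
    have : (x / y) ^ n = 1 := by
      rw [div_pow]; simp only at hxy; rw [hxy, div_self']
    exact div_eq_one.mp (htors _ n hn this)⟩
  have : Group.FG (G ⧸ G2) := QuotientGroup.fg G2
  have : Module.Finite ℤ (Additive (G ⧸ G2)) := Module.Finite.iff_addGroup_fg.mpr inferInstance
  let bas := Module.finBasis ℤ (Additive (G ⧸ G2))
  refine ⟨_, fun g => bas.equivFun (Additive.ofMul (g : G ⧸ G2)), ?_, ?_, ?_⟩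
  · intro x
    obtain ⟨g, hg⟩ := QuotientGroup.mk_surjective (Additive.toMul (bas.equivFun.symm x))
    refine ⟨g, ?_⟩
    simp only [hg, ofMul_toMul, LinearEquiv.apply_symm_apply]
  · intro g h
    simp only [QuotientGroup.mk_mul, ofMul_mul, map_add]
  · intro g
    rw [LinearEquiv.map_eq_zero_iff, ofMul_eq_zero, QuotientGroup.eq_one_iff]

lemma exists_omega {m : ℕ} (c : G) (hc : ∀ g, c * g = g * c) (hinj : ∀ i j : ℤ, c ^ i = c ^ j → i = j)
    (π : G → (Fin m → ℤ)) (hs : Function.Surjective π) (hm : ∀ g h, π (g * h) = π g + π h)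
    (hk : ∀ g, π g = 0 ↔ ∃ j : ℤ, c ^ j = g)
    (hcomm : ∀ g h : G, ∃ j : ℤ, c ^ j = ⁅g, h⁆) :
    ∃ ω : (Fin m → ℤ) →ₗ[ℤ] (Fin m → ℤ) →ₗ[ℤ] ℤ, ∀ g h, g * h = c ^ (ω (π g) (π h)) * (h * g) := by
  have hcz : ∀ (i : ℤ) g, c ^ i * g = g * c ^ i := fun i g => ((show Commute c g from hc g).zpow_left i)
  choose κ hκ using hcomm
  have hκ' : ∀ g h, g * h = c ^ (κ g h) * (h * g) := by
    intro g h; rw [hκ, commutatorElement_def]; group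
  have huniq : ∀ g h j, g * h = c ^ j * (h * g) → κ g h = j := by
    intro g h j hj
    rw [hκ'] at hj
    exact hinj _ _ (mul_right_cancel hj)
  have hl : ∀ g g' h, κ (g * g') h = κ g h + κ g' h := by
    intro g g' h
    apply huniq
    calc g * g' * h = g * (g' * h) := by group
      _ = g * (c ^ κ g' h * (h * g')) := by rw [← hκ']
      _ = c ^ κ g' h * (g * h) * g' := by rw [← mul_assoc, ← hcz]; group
      _ = c ^ κ g' h * (c ^ (κ g h) * (h * g)) * g' := by rw [← hκ']
      _ = c ^ (κ g h + κ g' h) * (h * (g * g')) := by rw [add_comm, zpow_add]; group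
  have hanti : ∀ g h, κ g h = - κ h g := by
    intro g h
    apply huniq
    rw [hκ' h g]
    group
  have hr : ∀ g h h', κ g (h * h') = κ g h + κ g h' := by
    intro g h h'
    rw [hanti, hl, hanti g h, hanti g h']; ring
  have hcl : ∀ (j : ℤ) h, κ (c ^ j) h = 0 := by
    intro j h
    apply huniq
    rw [hcz]; simp
  have hdep : ∀ g g' h, π g = π g' → κ g h = κ g' h := by
    intro g g' h he
    have : π (g * g'⁻¹) = 0 := by
      have h1 := hm g g'⁻¹
      have h2 := hm g' g'⁻¹
      rw [h1, he, ← h2]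
      rw [hk]; exact ⟨0, by simp⟩
    obtain ⟨j, hj⟩ := (hk _).mp this
    have : g = c ^ j * g' := by rw [hj]; group
    rw [this, hl, hcl, zero_add]
  have hdep' : ∀ g h h', π h = π h' → κ g h = κ g h' := by
    intro g h h' he
    rw [hanti, hdep h h' g he, ← hanti]
  choose s hsπ using hs
  let f1 : (Fin m → ℤ) → (Fin m → ℤ) →+ ℤ := fun x => AddMonoidHom.mk' (fun y => κ (s x) (s y)) (by
    intro y y'
    show κ (s x) (s (y + y')) = _
    rw [← hr]
    apply hdep'
    rw [hm, hsπ, hsπ, hsπ])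
  let f2 : (Fin m → ℤ) →+ (Fin m → ℤ) →ₗ[ℤ] ℤ := AddMonoidHom.mk' (fun x => (f1 x).toIntLinearMap) (by
    intro x x'
    apply LinearMap.ext
    intro y
    show κ (s (x + x')) (s y) = κ (s x) (s y) + κ (s x') (s y)
    rw [← hl]
    apply hdep
    rw [hm, hsπ, hsπ, hsπ])
  refine ⟨f2.toIntLinearMap, fun g h => ?_⟩
  have : f2.toIntLinearMap (π g) (π h) = κ g h := by
    show κ (s (π g)) (s (π h)) = κ g h
    rw [hdep _ g _ (hsπ _), hdep' _ _ h (hsπ _)]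
  rw [this]
  exact hκ' g h

lemma exists_skew {m : ℕ} (ω : (Fin m → ℤ) →ₗ[ℤ] (Fin m → ℤ) →ₗ[ℤ] ℤ) (halt : ∀ x, ω x x = 0) :
    ∃ β : (Fin m → ℤ) →ₗ[ℤ] (Fin m → ℤ) →ₗ[ℤ] ℤ, ∀ x y, β x y - β y x = ω x y := by
  have hanti : ∀ x y, ω x y = - ω y x := by
    intro x y
    have := halt (x + y)
    simp only [map_add, LinearMap.add_apply, halt] at this
    linarith
  let e := Pi.basisFun ℤ (Fin m)
  let W : Fin m → Fin m → ℤ := fun i j => if i < j then ω (e i) (e j) else 0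
  let B : (Fin m → ℤ) →ₗ[ℤ] (Fin m → ℤ) →ₗ[ℤ] ℤ :=
    e.constr ℤ (fun i => e.constr ℤ (fun j => W i j))
  have hB : ∀ i j, B (e i) (e j) = W i j := by
    intro i j
    simp only [B, Module.Basis.constr_basis]
  refine ⟨B, ?_⟩
  have : B - B.flip = ω := by
    apply LinearMap.ext_basis e e
    intro i j
    rw [LinearMap.sub_apply, LinearMap.sub_apply, LinearMap.flip_apply, hB, hB]
    simp only [W]
    rcases lt_trichotomy i j with h | h | h
    · rw [if_pos h, if_neg h.not_gt, sub_zero]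
    · subst h
      rw [if_neg (lt_irrefl _), halt, sub_zero]
    · rw [if_neg h.not_gt, if_pos h, hanti (e i), zero_sub]
  intro x y
  rw [← this]
  rfl

lemma exists_section {m : ℕ} (c : G) (hc : ∀ g, c * g = g * c)
    (π : G → (Fin m → ℤ)) (hs : Function.Surjective π) (hm : ∀ g h, π (g * h) = π g + π h)
    (hk : ∀ g, π g = 0 ↔ ∃ j : ℤ, c ^ j = g)
    (ω β : (Fin m → ℤ) →ₗ[ℤ] (Fin m → ℤ) →ₗ[ℤ] ℤ)
    (hω : ∀ g h, g * h = c ^ (ω (π g) (π h)) * (h * g))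
    (hβ : ∀ x y, β x y - β y x = ω x y) :
    ∃ s : (Fin m → ℤ) → G, (∀ x, π (s x) = x) ∧ ∀ x y, s x * s y = s (x + y) * c ^ (β x y) := by
  have hcz : ∀ (i : ℤ) g, c ^ i * g = g * c ^ i := fun i g => ((show Commute c g from hc g).zpow_left i)
  have hπc : ∀ j : ℤ, π (c ^ j) = 0 := fun j => (hk _).mpr ⟨j, rfl⟩
  have hπ1 : π 1 = 0 := by simpa using hπc 0
  have hπi : ∀ g, π g⁻¹ = - π g := by
    intro g
    have := hm g⁻¹ g
    rw [inv_mul_cancel, hπ1] at this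
    exact eq_neg_of_add_eq_zero_left this.symm
  let iA : Add G := ⟨fun g h => g * h * c ^ (-(β (π g) (π h)))⟩
  let iZ : Zero G := ⟨1⟩
  let iN : Neg G := ⟨fun g => g⁻¹ * c ^ (-(β (π g) (π g)))⟩
  have hadd : ∀ g h : G, g + h = g * h * c ^ (-(β (π g) (π h))) := fun _ _ => rfl
  have hzero : (0:G) = 1 := rfl
  have hneg : ∀ g : G, -g = g⁻¹ * c ^ (-(β (π g) (π g))) := fun _ => rfl
  have hπadd : ∀ g h : G, π (g + h) = π g + π h := by
    intro g h; rw [hadd, hm, hm, hπc, add_zero]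
  let iG : AddGroup G := AddGroup.ofLeftAxioms
    (by
      intro x y z
      rw [hadd (x + y), hadd x (y + z), hπadd, hπadd, hadd, hadd, map_add, map_add, LinearMap.add_apply]
      calc x * y * c ^ (-(β (π x) (π y))) * z * c ^ (-(β (π x) (π z) + β (π y) (π z)))
          = x * y * (c ^ (-(β (π x) (π y))) * z) * c ^ (-(β (π x) (π z) + β (π y) (π z))) := by group
        _ = x * y * (z * c ^ (-(β (π x) (π y)))) * c ^ (-(β (π x) (π z) + β (π y) (π z))) := by rw [hcz]
        _ = _ := by group)
    (by
      intro x
      rw [hadd, hzero, hπ1]; simp)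
    (by
      intro x
      rw [hadd, hneg, hm, hπc, hπi, hzero, mul_assoc, mul_assoc, ← mul_assoc _ x, hcz]
      simp)
  let iC : AddCommGroup G := { iG with
    add_comm := by
      intro x y
      show x * y * c ^ (-(β (π x) (π y))) = y * x * c ^ (-(β (π y) (π x)))
      rw [hω x y, ← hβ, hcz, mul_assoc, ← zpow_add]
      congr 2
      ring }
  let P : G →+ (Fin m → ℤ) := { toFun := π, map_zero' := hπ1, map_add' := hπadd }
  obtain ⟨s, hsec⟩ := Module.projective_lifting_property P.toIntLinearMap LinearMap.id hs
  have hsx : ∀ x, π (s x) = x := fun x => LinearMap.congr_fun hsec x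
  refine ⟨s, hsx, fun x y => ?_⟩
  have : s (x + y) = s x * s y * c ^ (-(β (π (s x)) (π (s y)))) := map_add s x y
  rw [this, hsx, hsx]
  group

lemma exists_plane {m : ℕ} (ω : (Fin m → ℤ) →ₗ[ℤ] (Fin m → ℤ) →ₗ[ℤ] ℤ) (halt : ∀ x, ω x x = 0)
    (hne : ∃ x y, ω x y ≠ 0) :
    ∃ (u v : Fin m → ℤ) (d : ℤ) (a b : (Fin m → ℤ) →ₗ[ℤ] ℤ), 0 < d ∧ ω u v = d ∧
      (∀ x, ω x v = d * a x) ∧ (∀ x, ω u x = d * b x) := by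
  have hanti : ∀ x y, ω x y = - ω y x := by
    intro x y
    have := halt (x + y)
    simp only [map_add, LinearMap.add_apply, halt] at this
    linarith
  have hex : ∃ n : ℕ, 0 < n ∧ ∃ x y, ω x y = n := by
    obtain ⟨x, y, h⟩ := hne
    rcases lt_or_gt_of_ne h with h | h
    · exact ⟨(ω y x).toNat, by have := hanti x y; omega, y, x, by have := hanti x y; omega⟩
    · exact ⟨(ω x y).toNat, by omega, x, y, by omega⟩
  classical
  obtain ⟨hn0, u, v, huv⟩ := Nat.find_spec hex
  have hmin := fun k (hk : k < Nat.find hex) => Nat.find_min hex hk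
  set n := Nat.find hex
  have hmin' : ∀ x y, 0 ≤ ω x y → ω x y < n → ω x y = 0 := by
    intro x y h0 h1
    by_contra h2
    exact hmin (ω x y).toNat (by omega) ⟨by omega, x, y, by omega⟩
  have hn : (0:ℤ) < n := by exact_mod_cast hn0
  have hdr : ∀ x, (n:ℤ) ∣ ω u x := by
    intro x
    apply Int.dvd_of_emod_eq_zero
    have e : ω u (x - (ω u x / n) • v) = ω u x % n := by
      rw [map_sub, map_smul, huv, smul_eq_mul, Int.emod_def]; ring
    rw [← e]
    apply hmin' <;> rw [e]
    · exact Int.emod_nonneg _ hn.ne'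
    · exact Int.emod_lt_of_pos _ hn
  have hdl : ∀ x, (n:ℤ) ∣ ω x v := by
    intro x
    apply Int.dvd_of_emod_eq_zero
    have e : ω (x - (ω x v / n) • u) v = ω x v % n := by
      rw [map_sub, map_smul, LinearMap.sub_apply, LinearMap.smul_apply, huv, smul_eq_mul, Int.emod_def]; ring
    rw [← e]
    apply hmin' <;> rw [e]
    · exact Int.emod_nonneg _ hn.ne'
    · exact Int.emod_lt_of_pos _ hn
  choose b hb using hdr
  choose a ha using hdl
  let a' : (Fin m → ℤ) →+ ℤ := AddMonoidHom.mk' a (by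
    intro x y
    apply mul_left_cancel₀ hn.ne'
    rw [mul_add, ← ha, ← ha, ← ha, map_add, LinearMap.add_apply])
  let b' : (Fin m → ℤ) →+ ℤ := AddMonoidHom.mk' b (by
    intro x y
    apply mul_left_cancel₀ hn.ne'
    rw [mul_add, ← hb, ← hb, ← hb, map_add])
  exact ⟨u, v, n, a'.toIntLinearMap, b'.toIntLinearMap, hn, huv, ha, hb⟩

lemma exists_HData (hfg : Group.FG G)
    (htf : ∀ (g : G) (n : ℕ), 0 < n → g ^ n = 1 → g = 1)
    (h2step : commutator G ≤ Subgroup.center G)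
    (G2 : Subgroup G) [G2.Normal]
    (hG2 : ∀ g : G, g ∈ G2 ↔ ∃ n : ℕ, 0 < n ∧ g ^ n ∈ commutator G)
    (hcyc : IsCyclic G2) (hinf : Infinite G2) : ∃ m : ℕ, Nonempty (HData G m) := by
  obtain ⟨m, π, hs, hm, hk⟩ := exists_proj hfg G2 hG2
  obtain ⟨⟨c, hcG2⟩, hgen⟩ := hcyc.exists_generator
  have hmem : ∀ g, g ∈ G2 ↔ ∃ j : ℤ, c ^ j = g := by
    intro g
    constructor
    · intro hg
      obtain ⟨j, hj⟩ := hgen ⟨g, hg⟩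
      exact ⟨j, by simpa using congrArg Subtype.val hj⟩
    · rintro ⟨j, rfl⟩
      exact G2.zpow_mem hcG2 j
  have hcom : ∀ g h : G, ⁅g, h⁆ ∈ commutator G := fun g h =>
    Subgroup.commutator_mem_commutator (Subgroup.mem_top _) (Subgroup.mem_top _)
  -- `c` is central
  have hc : ∀ g, c * g = g * c := by
    intro g
    obtain ⟨n, hn, hcn⟩ := (hG2 c).mp hcG2
    have hz : ∀ t, t * ⁅c, g⁆ = ⁅c, g⁆ * t := fun t =>
      Subgroup.mem_center_iff.mp (h2step (hcom c g)) t
    have hcn' := Subgroup.mem_center_iff.mp (h2step hcn) g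
    have hpow : ∀ k : ℕ, c ^ k * g = ⁅c, g⁆ ^ k * (g * c ^ k) := by
      intro k
      induction k with
      | zero => simp
      | succ k ih =>
        have hcg : c * g = ⁅c, g⁆ * (g * c) := by rw [commutatorElement_def]; group
        calc c ^ (k+1) * g = c ^ k * (c * g) := by rw [pow_succ]; group
          _ = c ^ k * ⁅c, g⁆ * (g * c) := by rw [hcg]; group
          _ = ⁅c, g⁆ * (c ^ k * g) * c := by rw [hz]; group
          _ = ⁅c, g⁆ * (⁅c, g⁆ ^ k * (g * c ^ k)) * c := by rw [ih]
          _ = _ := by rw [pow_succ' ⁅c, g⁆, pow_succ c]; group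
    have h1 := hpow n
    rw [← hcn'] at h1
    have h2 : ⁅c, g⁆ ^ n = 1 := (mul_eq_right.mp h1.symm)
    have h3 := htf _ n hn h2
    exact commutatorElement_eq_one_iff_mul_comm.mp h3
  have hc1 : c ≠ 1 := by
    rintro rfl
    obtain ⟨x, hx⟩ := exists_ne (1 : G2)
    obtain ⟨j, hj⟩ := (hmem x.1).mp x.2
    apply hx
    apply Subtype.ext
    rw [← hj]; simp
  have hinj : ∀ i j : ℤ, c ^ i = c ^ j → i = j := by
    have h0 : ∀ k : ℕ, c ^ k = 1 → k = 0 := by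
      intro k hk
      by_contra h
      exact hc1 (htf c k (by omega) hk)
    have h00 : ∀ k : ℤ, c ^ k = 1 → k = 0 := by
      intro k hk
      rcases Int.natAbs_eq k with h | h
      · rw [h, zpow_natCast] at hk
        have := h0 _ hk; omega
      · rw [h, zpow_neg, inv_eq_one, zpow_natCast] at hk
        have := h0 _ hk; omega
    intro i j hij
    have := h00 (i - j) (by rw [zpow_sub, hij, mul_inv_cancel])
    omega
  have hk' : ∀ g, π g = 0 ↔ ∃ j : ℤ, c ^ j = g := fun g => (hk g).trans (hmem g)
  have hcomm : ∀ g h : G, ∃ j : ℤ, c ^ j = ⁅g, h⁆ := by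
    intro g h
    rw [← hmem, hG2]
    exact ⟨1, one_pos, by rw [pow_one]; exact hcom g h⟩
  obtain ⟨ω, hω⟩ := exists_omega c hc hinj π hs hm hk' hcomm
  have halt : ∀ x, ω x x = 0 := by
    intro x
    obtain ⟨g, rfl⟩ := hs x
    have := hω g g
    rw [right_eq_mul] at this
    exact hinj _ _ (by rw [this, zpow_zero])
  have hanti : ∀ x y, ω x y = - ω y x := by
    intro x y
    have := halt (x + y)
    simp only [map_add, LinearMap.add_apply, halt] at this
    linarith
  have hne : ∃ x y, ω x y ≠ 0 := by
    by_contra hcon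
    push Not at hcon
    have hab : ∀ g h : G, ⁅g, h⁆ = 1 := by
      intro g h
      rw [commutatorElement_eq_one_iff_mul_comm, hω g h, hcon, zpow_zero, one_mul]
    have hbot : commutator G = ⊥ := by
      rw [eq_bot_iff, commutator_def, Subgroup.commutator_le]
      intro g _ h _
      rw [hab]; exact Subgroup.one_mem _
    obtain ⟨n, hn, hcn⟩ := (hG2 c).mp hcG2
    rw [hbot, Subgroup.mem_bot] at hcn
    exact hc1 (htf c n hn hcn)
  obtain ⟨u, v, d, a, b, hd, huv, ha, hb⟩ := exists_plane ω halt hne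
  obtain ⟨β₀, hβ₀⟩ := exists_skew ω halt
  have au : a u = 1 := mul_left_cancel₀ hd.ne' (by rw [← ha, huv, mul_one])
  have av : a v = 0 := mul_left_cancel₀ hd.ne' (by rw [← ha, halt, mul_zero])
  have bu : b u = 0 := mul_left_cancel₀ hd.ne' (by rw [← hb, halt, mul_zero])
  have bv : b v = 1 := mul_left_cancel₀ hd.ne' (by rw [← hb, huv, mul_one])
  let p : (Fin m → ℤ) →ₗ[ℤ] (Fin m → ℤ) :=
    LinearMap.id - a.smulRight u - b.smulRight v
  have hp : ∀ x, p x = x - a x • u - b x • v := fun x => rfl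
  let β : (Fin m → ℤ) →ₗ[ℤ] (Fin m → ℤ) →ₗ[ℤ] ℤ :=
    a.smulRight (d • b) + β₀.compl₁₂ p p
  have hβ : ∀ x y, β x y = d * a x * b y + β₀ (p x) (p y) := by
    intro x y
    show a x * (d * b y) + β₀ (p x) (p y) = _
    ring
  have hβω : ∀ x y, β x y - β y x = ω x y := by
    intro x y
    have h1 := hβ₀ (p x) (p y)
    have h2 : ω (p x) (p y) = ω x y - d * a x * b y + d * a y * b x := by
      rw [hp, hp]
      simp only [map_sub, map_smul, LinearMap.sub_apply, LinearMap.smul_apply, smul_eq_mul, halt, huv,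
        ha, hb, hanti v, hanti x u]
      ring
    rw [hβ, hβ]
    linarith
  obtain ⟨s, hsπ, hsm⟩ := exists_section c hc π hs hm hk' ω β hω hβω
  have hcz : ∀ (i : ℤ) g, c ^ i * g = g * c ^ i := fun i g => ((show Commute c g from hc g).zpow_left i)
  let Ψ : (Fin m → ℤ) × ℤ → G := fun q => s q.1 * c ^ q.2
  have hπc : ∀ j : ℤ, π (c ^ j) = 0 := fun j => (hk' _).mpr ⟨j, rfl⟩
  have hΨ1 : ∀ q, π (Ψ q) = q.1 := by
    intro q; simp only [Ψ]; rw [hm, hπc, hsπ, add_zero]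
  have hbij : Function.Bijective Ψ := by
    constructor
    · intro q q' h
      have h1 : q.1 = q'.1 := by rw [← hΨ1, ← hΨ1, h]
      simp only [Ψ] at h
      rw [h1] at h
      exact Prod.ext h1 (hinj _ _ (mul_left_cancel h))
    · intro g
      have h0 : π ((s (π g))⁻¹ * g) = 0 := by
        have h1 := hm (s (π g)) ((s (π g))⁻¹ * g)
        rw [mul_inv_cancel_left, hsπ] at h1
        simpa using h1
      obtain ⟨j, hj⟩ := (hk' _).mp h0
      exact ⟨(π g, j), by simp only [Ψ]; rw [hj]; group⟩
  have hΨm : ∀ q q', Ψ q * Ψ q' = Ψ (q.1 + q'.1, q.2 + q'.2 + β q.1 q'.1) := by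
    intro q q'
    simp only [Ψ]
    calc s q.1 * c ^ q.2 * (s q'.1 * c ^ q'.2) = s q.1 * (c ^ q.2 * s q'.1) * c ^ q'.2 := by group
      _ = (s q.1 * s q'.1) * c ^ q.2 * c ^ q'.2 := by rw [hcz]; group
      _ = s (q.1 + q'.1) * c ^ β q.1 q'.1 * c ^ q.2 * c ^ q'.2 := by rw [hsm]
      _ = s (q.1 + q'.1) * c ^ (β q.1 q'.1 + q.2 + q'.2) := by rw [zpow_add, zpow_add]; group
      _ = _ := by congr 2; ring
  let E := Equiv.ofBijective Ψ hbij
  have hE : ∀ g h, E.symm (g * h) = ((E.symm g).1 + (E.symm h).1,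
      (E.symm g).2 + (E.symm h).2 + β (E.symm g).1 (E.symm h).1) := by
    intro g h
    rw [Equiv.symm_apply_eq]
    show _ = Ψ _
    rw [← hΨm]
    congr 1
    · exact (E.apply_symm_apply g).symm
    · exact (E.apply_symm_apply h).symm
  exact ⟨m, ⟨{
    Φ := E.symm
    a := a
    b := b
    u := u
    v := v
    au := au
    av := av
    bu := bu
    bv := bv
    d := d
    hd := hd
    β := β₀
    p := p
    hp := hp
    mul1 := fun g h => by rw [hE]
    mul2 := fun g h => by rw [hE, hβ] }⟩⟩

end Algebra

/-- On every generalised Heisenberg group there is an automorphism whose twisted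
conjugacy growth is `n ^ k * ln n` for some `k`. -/
theorem exists_automorphism_log_growth
    (G : Type*) [Group G]
    (hfg : Group.FG G)
    (htf : ∀ (g : G) (n : ℕ), 0 < n → g ^ n = 1 → g = 1)
    (h2step : commutator G ≤ Subgroup.center G)
    (G2 : Subgroup G) [G2.Normal]
    (hG2 : ∀ g : G, g ∈ G2 ↔ ∃ n : ℕ, 0 < n ∧ g ^ n ∈ commutator G)
    (hcyc : IsCyclic G2) (hinf : Infinite G2) :
    ∃ (ψ : G ≃* G) (k : ℕ), ∀ S : Finset G, Subgroup.closure (S : Set G) = ⊤ →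
      GrowthEquiv (fun n => (twistedGrowth ψ S n : ℝ))
        (fun n => (n : ℝ) ^ k * Real.log n) := by
  obtain ⟨m, ⟨D⟩⟩ := exists_HData hfg htf h2step G2 hG2 hcyc hinf
  exact ⟨D.ψ, 2, fun S hS => D.growth_equiv S hS⟩
end
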